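/- arXiv:1810.13275 — 2 statements merged into one kernel-verified Lean document; each statement's English description precedes it below -/
import Mathlib

section
/- For every real parameter α > 0 and any two finite seed trees S and S' of sizes |S| ≥ 3 and |S'| ≥ 3, the limit d(S,S') = lim_{n→∞} d_TV(T_n^S, T_n^{S'}) exists, and d(S,S') > 0 whenever S is not graph-isomorphic to S'. -/
/-!
The limit exists because the total variation distance is nonincreasing in `n`: isomorphic trees
have the same transitions between isomorphism classes (`extendTree_iso`), so a step of the chain
can only lose information (`SChain.tv_succ_le`). The substance is a lower bound, uniform in `n`,
when `S` and `S'` are not isomorphic.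

*Observables.* The monomials `∏_v [deg v - 1 + α]^{(m v)}` in rising factorials of the attachment
weights are adapted to the dynamics: attaching a vertex at `u` with probability proportional to the
weight of `u` multiplies such a monomial, on average, by `1 + |m| / Z_n`, where
`Z_n = (1 + α) n - 2`. For a function `q` on graphs with `r` vertices and exponents
`ℓ_1, …, ℓ_r`, the observable `obsH α q ℓ` is the sum, over the injective maps `f` from the `r`
labels to the vertices of the tree, of `q` of the induced graph times the monomial with exponent
`ℓ_i` at `f i`. One step of the chain acts on these observables triangularly (`stepOp_obsH`): an
observable of order `r` is multiplied by `1 + |ℓ| / Z_n`, up to observables of order `r - 1` which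
come from the maps that hit the new vertex. The exponents of the latter are no smaller, so a lower
bound `ℓ_i ≥ ℓ₀` is preserved.

*Growth of the difference.* Fix an integer `ℓ₀ > 1 + α`, and let `δ_n` be the difference of the two
laws. If some observable with exponents `≥ ℓ₀` has nonzero `δ`-expectation at the initial time,
take one of minimal order. All observables of smaller order are annihilated by `δ_n` at all times
(`SChain.kill`), so the `δ_n`-expectation of the chosen one is exactly its initial value times
`growth = ∏_j (1 + |ℓ| / Z_j)` (`SChain.expect_obsH`).

*Second moments.* The square of that observable is dominated by a multiple of `obsK`, the sum of all
monomials of total degree `2 |ℓ|` with nonzero exponents `≥ ℓ₀` (`obsH_sq_le`). In the recursion for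
`obsK`, a new vertex which carries an exponent `b ≥ ℓ₀` lowers the degree by `b > 1 + α`. Degree `x`
corresponds to growth of order `n ^ (x / (1 + α))`, so this gains more than one power of `n`, and
the perturbations are summable (`seq_bound`). Hence the second moment is at most a constant times
`growth ^ 2` (`SChain.expect_sq_le`). Truncating the observable at a large multiple of `growth`
(`abs_expect_le_of_sq`) turns this into a lower bound for the total variation (`tv_lower_bound`).

*A separating observable.* Assume `|S| ≤ |S'| = k'`. At time `k'`, use the indicator of the pattern
`S'` with `k'` labels and all exponents equal to `ℓ₀`: it vanishes on trees which are not isomorphic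
to `S'` and takes one positive value on those which are. The tree grown from `S` is with positive
probability not isomorphic to `S'`, since attaching a vertex to vertices of distinct degrees gives
non-isomorphic trees (`exists_lawW_ne_zero`, `expect_pattern_ne`).
-/

open MeasureTheory Filter Asymptotics

noncomputable section

namespace AffinePA

instance (V : Type*) : MeasurableSpace (SimpleGraph V) := ⊤

/-- The degree of a vertex. -/
def degR {V : Type*} (G : SimpleGraph V) (v : V) : ℕ := Nat.card {w // G.Adj v w}

/-- The tree on `n+1` vertices obtained from `G` by attaching the new vertex to `u`. -/
def extendTree {n : ℕ} (G : SimpleGraph (Fin n)) (u : Fin n) : SimpleGraph (Fin (n + 1)) :=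
  SimpleGraph.fromRel fun a b =>
    (∃ a' b' : Fin n, a = Fin.castSucc a' ∧ b = Fin.castSucc b' ∧ G.Adj a' b') ∨
      (a = Fin.castSucc u ∧ b = Fin.last n)

/-- One step of the affine preferential attachment dynamics. -/
def stepMeasure (α : ℝ) {n : ℕ} (G : SimpleGraph (Fin n)) :
    Measure (SimpleGraph (Fin (n + 1))) :=
  ∑ u : Fin n,
    ENNReal.ofReal (((degR G u : ℝ) - 1 + α) / ((1 + α) * (n : ℝ) - 2)) •
      Measure.dirac (extendTree G u)

/-- The law of the α-PA tree with `m` added vertices, started from the seed `S`. -/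
def paLaw (α : ℝ) {k : ℕ} (S : SimpleGraph (Fin k)) :
    (m : ℕ) → Measure (SimpleGraph (Fin (k + m)))
  | 0 => Measure.dirac S
  | m + 1 => (paLaw α S m).bind (stepMeasure α)

/-- The weight `∏_u [deg_T(f u) - 1]_{ℓ u}` of a map `f`. -/
def embWeight {V W : Type*} [Fintype V] (T : SimpleGraph W) (ℓ : V → ℕ) (f : V → W) : ℝ :=
  ∏ u : V, ((degR T (f u) - 1).descFactorial (ℓ u) : ℝ)

/-- The observable `F_{(τ,ℓ)}(T)`. -/
def obsG {V W : Type*} [Fintype V] (τ : SimpleGraph V) (ℓ : V → ℕ) (T : SimpleGraph W) : ℝ :=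
  ∑ᶠ φ : τ ↪g T, embWeight T ℓ ⇑φ

/-- The weight `w(τ,ℓ)` of a decorated tree. -/
def weightG {V : Type*} [Fintype V] (τ : SimpleGraph V) (ℓ : V → ℕ) : ℕ :=
  if Fintype.card V ≤ 2 ∧ ∀ v, ℓ v = 0 then 1
  else (∑ v, ℓ v) + Nat.card {v // degR τ v = 1 ∧ ℓ v = 0}

/-- A decorated tree: a finite graph on `Fin n` with nonnegative integer decorations. -/
structure DecTree where
  n : ℕ
  tree : SimpleGraph (Fin n)
  dec : Fin n → ℕ

def DecTree.wt (τ : DecTree) : ℕ := weightG τ.tree τ.dec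

def DecTree.decSum (τ : DecTree) : ℕ := ∑ v, τ.dec v

def DecTree.obs (τ : DecTree) {W : Type*} (T : SimpleGraph W) : ℝ := obsG τ.tree τ.dec T

/-- The strict partial order `≺` on decorated trees. -/
def DecLt (σ τ : DecTree) : Prop :=
  (σ.wt < τ.wt ∧ σ.n ≤ τ.n) ∨ (σ.wt = τ.wt ∧ σ.n < τ.n) ∨
    (σ.wt = τ.wt ∧ σ.n = τ.n ∧ σ.decSum < τ.decSum)

open Classical in
/-- `F_{τ+τ}(T)`: sum over pairs of embeddings with overlapping images. -/
def obsOverlapG {V W : Type*} [Fintype V] (τ : SimpleGraph V) (ℓ : V → ℕ)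
    (T : SimpleGraph W) : ℝ :=
  ∑ᶠ (φ₁ : τ ↪g T) (φ₂ : τ ↪g T),
    if (Set.range ⇑φ₁ ∩ Set.range ⇑φ₂).Nonempty then
      embWeight T ℓ ⇑φ₁ * embWeight T ℓ ⇑φ₂
    else 0

open Classical in
/-- `F_{τ,σ}(T)`: sum over pairs of embeddings with disjoint images. -/
def obsDisjG {V₁ V₂ W : Type*} [Fintype V₁] [Fintype V₂] (τ : SimpleGraph V₁) (ℓτ : V₁ → ℕ)
    (σ : SimpleGraph V₂) (ℓσ : V₂ → ℕ) (T : SimpleGraph W) : ℝ :=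
  ∑ᶠ (φ₁ : τ ↪g T) (φ₂ : σ ↪g T),
    if Disjoint (Set.range ⇑φ₁) (Set.range ⇑φ₂) then
      embWeight T ℓτ ⇑φ₁ * embWeight T ℓσ ⇑φ₂
    else 0

/-- `f ≈ g` : same order of magnitude, eventually. -/
def asympEquiv (f g : ℕ → ℝ) : Prop :=
  ∃ C : ℝ, 0 < C ∧ ∀ᶠ n in atTop, f n ≤ C * g n ∧ g n ≤ C * f n

/-- Descending factorial `[x]_l` of a real number. -/
def descPoch (x : ℝ) (l : ℕ) : ℝ := ∏ i ∈ Finset.range l, (x - (i : ℝ))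

/-- Total variation distance between two measures. -/
def tvDist {X : Type*} [MeasurableSpace X] (μ ν : Measure X) : ℝ :=
  ⨆ s : {s : Set X // MeasurableSet s}, |(μ ↑s).toReal - (ν ↑s).toReal|

open Classical in
/-- The contribution to `F_τ` of embeddings whose image meets the seed. -/
def obsMeetSeed (k m : ℕ) {r : ℕ} (τ : SimpleGraph (Fin r)) (ℓ : Fin r → ℕ)
    (T : SimpleGraph (Fin (k + m))) : ℝ :=
  ∑ᶠ φ : τ ↪g T,
    if ∃ (x : Fin r) (y : Fin k), φ x = Fin.castAdd m y then embWeight T ℓ ⇑φ else 0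

/-- The contribution to `F_τ` of embeddings contained in the seed. -/
def obsInSeed (k m : ℕ) {r : ℕ} (τ : SimpleGraph (Fin r)) (ℓ : Fin r → ℕ)
    (S : SimpleGraph (Fin k)) (T : SimpleGraph (Fin (k + m))) : ℝ :=
  ∑ᶠ φ : τ ↪g S, embWeight T ℓ fun u => Fin.castAdd m (φ u)

/-- `D_{τ,d}(T)`: the number of perfect embeddings of `(τ,d)` in `T`. -/
def perfCount {V W : Type*} (τ : SimpleGraph V) (d : V → ℕ) (T : SimpleGraph W) : ℕ :=
  Nat.card {φ : τ ↪g T // ∀ u, degR T (φ u) = d u}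

/-- `τ` is `(T₁,T₂)`-blind. -/
def IsBlind {V W₁ W₂ : Type*} (τ : SimpleGraph V) (T₁ : SimpleGraph W₁)
    (T₂ : SimpleGraph W₂) : Prop :=
  ∀ d : V → ℕ, (∀ u, 1 ≤ d u) → perfCount τ d T₁ = perfCount τ d T₂

/-- `D_{σ,τ,d}(T)`: perfect embeddings of `(τ,d)` meeting the seed exactly in `φ(A)`. -/
def perfCountSeed (k m : ℕ) {r : ℕ} (τ : SimpleGraph (Fin r)) (A : Finset (Fin r))
    (d : Fin r → ℕ) (T : SimpleGraph (Fin (k + m))) : ℕ :=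
  Nat.card {φ : τ ↪g T //
    (∀ u, degR T (φ u) = d u) ∧ ∀ u : Fin r, (∃ y : Fin k, φ u = Fin.castAdd m y) ↔ u ∈ A}

/-- The σ-algebra generated by `T_0, …, T_m`. -/
def natFilt {Ω : Type*} [MeasurableSpace Ω] {k : ℕ}
    (T : (m : ℕ) → Ω → SimpleGraph (Fin (k + m))) (m : ℕ) : MeasurableSpace Ω :=
  ⨆ j ∈ Set.Iic m, MeasurableSpace.comap (T j) inferInstance

/-- `(T_m)` is an α-PA chain started from the seed `S`, on the probability space `(Ω,P)`. -/
structure IsPAChain (α : ℝ) {k : ℕ} (S : SimpleGraph (Fin k)) {Ω : Type*} [MeasurableSpace Ω]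
    (P : Measure Ω) (T : (m : ℕ) → Ω → SimpleGraph (Fin (k + m))) : Prop where
  isProb : IsProbabilityMeasure P
  meas : ∀ m, Measurable (T m)
  init : ∀ᵐ ω ∂P, T 0 ω = S
  step : ∀ (m : ℕ) (f : SimpleGraph (Fin (k + (m + 1))) → ℝ),
    P[(fun ω => f (T (m + 1) ω))|natFilt T m] =ᵐ[P]
      fun ω => ∫ G, f G ∂stepMeasure α (T m ω)

/-- The natural filtration of the chain. -/
def natFiltration {Ω : Type*} [mΩ : MeasurableSpace Ω] {k : ℕ}
    (T : (m : ℕ) → Ω → SimpleGraph (Fin (k + m))) (hT : ∀ m, Measurable (T m)) :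
    Filtration ℕ mΩ where
  seq := natFilt T
  mono' _ _ hij := biSup_mono fun _ hx => le_trans hx hij
  le' _ := iSup_le fun l => iSup_le fun _ => (hT l).comap_le

/-- Isomorphism of simple graphs as a setoid. -/
def isoSetoid (n : ℕ) : Setoid (SimpleGraph (Fin n)) where
  r G H := Nonempty (G ≃g H)
  iseqv := ⟨fun G => ⟨RelIso.refl G.Adj⟩, fun ⟨e⟩ => ⟨e.symm⟩, fun ⟨e⟩ ⟨f⟩ => ⟨e.trans f⟩⟩

/-- Isomorphism classes of graphs on `n` vertices. -/
def IsoClass (n : ℕ) : Type := Quotient (isoSetoid n)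

instance (n : ℕ) : MeasurableSpace (IsoClass n) := ⊤

/-- The law of the isomorphism class of the α-PA tree with `n` vertices grown from `S`. -/
def isoClassLaw (α : ℝ) {k : ℕ} (S : SimpleGraph (Fin k)) (n : ℕ) : Measure (IsoClass n) :=
  if h : k ≤ n then
    (paLaw α S (n - k)).map fun G =>
      Quotient.mk (isoSetoid n) (G.map (finCongr (Nat.add_sub_cancel' h)).toEmbedding)
  else 0



section Proof

open scoped Classical

/-! ### Rising factorials and vertex weights -/

/-- The rising factorial `x (x + 1) ⋯ (x + l - 1)`. -/
def ris (x : ℝ) (l : ℕ) : ℝ := ∏ i ∈ Finset.range l, (x + i)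

lemma ris_zero (x : ℝ) : ris x 0 = 1 := by simp [ris]

lemma ris_succ (x : ℝ) (l : ℕ) : ris x (l + 1) = ris x l * (x + l) := by
  simp [ris, Finset.prod_range_succ]

lemma ris_shift (x : ℝ) (l : ℕ) : x * ris (x + 1) l = ris x l * (x + l) := by
  induction l with
  | zero => simp [ris]
  | succ l ih =>
    rw [ris_succ, ris_succ, ← mul_assoc, ih]
    push_cast
    ring

lemma ris_pos {x : ℝ} (hx : 0 < x) (l : ℕ) : 0 < ris x l :=
  Finset.prod_pos fun i _ => by positivity

lemma ris_mul_le {x : ℝ} (hx : 0 < x) (a b : ℕ) : ris x a * ris x b ≤ ris x (a + b) := by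
  induction b with
  | zero => simp [ris_zero]
  | succ b ih =>
    rw [ris_succ, ← add_assoc, ris_succ, ← mul_assoc]
    have h1 := (ris_pos hx a).le
    have h2 := (ris_pos hx b).le
    apply mul_le_mul ih _ (by positivity) (ris_pos hx _).le
    push_cast
    have : (0 : ℝ) ≤ a := by positivity
    linarith

/-- The attachment weight `deg v - 1 + α` of a vertex. -/
def vtxW (α : ℝ) {n : ℕ} (G : SimpleGraph (Fin n)) (v : Fin n) : ℝ := (degR G v : ℝ) - 1 + α

/-- The total attachment weight `(1 + α) n - 2` of a tree with `n` vertices. -/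
def totW (α : ℝ) (n : ℕ) : ℝ := (1 + α) * (n : ℝ) - 2

lemma totW_pos {α : ℝ} (hα : 0 < α) {n : ℕ} (hn : 3 ≤ n) : 0 < totW α n := by
  have : (3 : ℝ) ≤ n := by exact_mod_cast hn
  unfold totW
  nlinarith

lemma totW_succ (α : ℝ) (n : ℕ) : totW α (n + 1) = totW α n + (1 + α) := by
  unfold totW; push_cast; ring

/-- A graph with `n` vertices, none of them isolated, and `n - 1` edges: the only properties of
trees which the argument uses. -/
def Good {n : ℕ} (G : SimpleGraph (Fin n)) : Prop :=
  (∀ v, 1 ≤ degR G v) ∧ ∑ v, degR G v + 2 = 2 * n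

lemma Good.vtxW_pos {α : ℝ} (hα : 0 < α) {n : ℕ} {G : SimpleGraph (Fin n)} (hG : Good G)
    (v : Fin n) : 0 < vtxW α G v := by
  have : (1 : ℝ) ≤ degR G v := by exact_mod_cast hG.1 v
  unfold vtxW
  linarith

lemma Good.sum_vtxW (α : ℝ) {n : ℕ} {G : SimpleGraph (Fin n)} (hG : Good G) :
    ∑ v, vtxW α G v = totW α n := by
  have h : (∑ v, (degR G v : ℝ)) + 2 = 2 * n := by exact_mod_cast hG.2
  simp only [vtxW, totW, Finset.sum_add_distrib, Finset.sum_sub_distrib]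
  simp
  linarith

lemma degR_eq_sum {n : ℕ} (G : SimpleGraph (Fin n)) (v : Fin n) :
    degR G v = ∑ w, if G.Adj v w then 1 else 0 := by
  simp [degR, Fintype.card_subtype]

lemma degR_eq_degree {n : ℕ} (G : SimpleGraph (Fin n)) (v : Fin n) :
    degR G v = G.degree v := by
  rw [degR, Nat.card_eq_fintype_card, ← G.card_neighborSet_eq_degree]
  rfl

lemma good_of_isTree {n : ℕ} (hn : 3 ≤ n) {G : SimpleGraph (Fin n)} (hG : G.IsTree) : Good G := by
  have : Nontrivial (Fin n) := Fin.nontrivial_iff_two_le.2 (by omega)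
  refine ⟨fun v => ?_, ?_⟩
  · rw [degR_eq_degree]
    exact hG.connected.preconnected.degree_pos_of_nontrivial v
  · simp only [degR_eq_degree]
    rw [G.sum_degrees_eq_twice_card_edges]
    have := hG.card_edgeFinset
    rw [Fintype.card_fin] at this
    omega

/-! ### Attaching a vertex -/

lemma extendTree_adj_castSucc {n : ℕ} (G : SimpleGraph (Fin n)) (u a b : Fin n) :
    (extendTree G u).Adj a.castSucc b.castSucc ↔ G.Adj a b := by
  simp only [extendTree, SimpleGraph.fromRel_adj, Fin.castSucc_inj, ne_eq,
    (Fin.castSucc_lt_last _).ne, and_false, or_false]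
  constructor
  · rintro ⟨-, ⟨a', b', rfl, rfl, h⟩ | ⟨a', b', rfl, rfl, h⟩⟩
    · exact h
    · exact h.symm
  · intro h
    exact ⟨h.ne, Or.inl ⟨a, b, rfl, rfl, h⟩⟩

lemma extendTree_adj_last {n : ℕ} (G : SimpleGraph (Fin n)) (u a : Fin n) :
    (extendTree G u).Adj a.castSucc (Fin.last n) ↔ a = u := by
  simp only [extendTree, SimpleGraph.fromRel_adj]
  have h1 : ∀ x : Fin n, x.castSucc ≠ Fin.last n := fun x => (Fin.castSucc_lt_last x).ne
  have h2 : ∀ x : Fin n, Fin.last n ≠ x.castSucc := fun x => (Fin.castSucc_lt_last x).ne'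
  simp [h1, h2]

lemma degR_extend_castSucc {n : ℕ} (G : SimpleGraph (Fin n)) (u a : Fin n) :
    degR (extendTree G u) a.castSucc = degR G a + if a = u then 1 else 0 := by
  rw [degR_eq_sum, degR_eq_sum, Fin.sum_univ_castSucc]
  simp only [extendTree_adj_castSucc, extendTree_adj_last]

lemma degR_extend_last {n : ℕ} (G : SimpleGraph (Fin n)) (u : Fin n) :
    degR (extendTree G u) (Fin.last n) = 1 := by
  rw [degR_eq_sum, Fin.sum_univ_castSucc]
  simp only [SimpleGraph.adj_comm _ (Fin.last n), extendTree_adj_last]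
  simp

lemma Good.extend {n : ℕ} {G : SimpleGraph (Fin n)} (hG : Good G) (u : Fin n) :
    Good (extendTree G u) := by
  constructor
  · intro v
    refine Fin.lastCases ?_ (fun i => ?_) v
    · rw [degR_extend_last]
    · rw [degR_extend_castSucc]
      exact le_add_right (hG.1 i)
  · rw [Fin.sum_univ_castSucc]
    simp only [degR_extend_castSucc, degR_extend_last, Finset.sum_add_distrib]
    simp
    have := hG.2
    omega

lemma vtxW_extend_castSucc (α : ℝ) {n : ℕ} (G : SimpleGraph (Fin n)) (u a : Fin n) :
    vtxW α (extendTree G u) a.castSucc = vtxW α G a + if a = u then 1 else 0 := by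
  unfold vtxW
  rw [degR_extend_castSucc]
  split_ifs <;> push_cast <;> ring

lemma vtxW_extend_last (α : ℝ) {n : ℕ} (G : SimpleGraph (Fin n)) (u : Fin n) :
    vtxW α (extendTree G u) (Fin.last n) = α := by
  unfold vtxW
  rw [degR_extend_last]
  simp

/-- The monomial `∏_v [deg v - 1 + α]^{(m v)}` in rising factorials. -/
def mono (α : ℝ) {n : ℕ} (G : SimpleGraph (Fin n)) (m : Fin n → ℕ) : ℝ :=
  ∏ v, ris (vtxW α G v) (m v)

lemma mono_pos {α : ℝ} (hα : 0 < α) {n : ℕ} {G : SimpleGraph (Fin n)} (hG : Good G)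
    (m : Fin n → ℕ) : 0 < mono α G m :=
  Finset.prod_pos fun v _ => ris_pos (hG.vtxW_pos hα v) _

/-- Rising factorials are adapted to the dynamics: weighting the degree increment at `u` by the
probability of attaching to `u` multiplies the monomial by an affine factor. -/
lemma mono_extend (α : ℝ) {n : ℕ} (G : SimpleGraph (Fin n)) (u : Fin n)
    (m : Fin (n + 1) → ℕ) :
    vtxW α G u * mono α (extendTree G u) m =
      ris α (m (Fin.last n)) *
        (mono α G (fun v => m v.castSucc) * (vtxW α G u + m u.castSucc)) := by
  unfold mono
  rw [Fin.prod_univ_castSucc, vtxW_extend_last]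
  have h : vtxW α G u * ∏ v : Fin n, ris (vtxW α (extendTree G u) v.castSucc) (m v.castSucc) =
      (∏ v, ris (vtxW α G v) (m v.castSucc)) * (vtxW α G u + m u.castSucc) := by
    rw [← Finset.mul_prod_erase _ _ (Finset.mem_univ u),
      ← Finset.mul_prod_erase Finset.univ (fun v => ris (vtxW α G v) (m v.castSucc))
        (Finset.mem_univ u), ← mul_assoc, vtxW_extend_castSucc, if_pos rfl, ris_shift]
    have : ∏ x ∈ Finset.univ.erase u,
          ris (vtxW α (extendTree G u) x.castSucc) (m x.castSucc) =
        ∏ x ∈ Finset.univ.erase u, ris (vtxW α G x) (m x.castSucc) := by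
      refine Finset.prod_congr rfl fun x hx => ?_
      rw [vtxW_extend_castSucc, if_neg (Finset.ne_of_mem_erase hx), add_zero]
    rw [this]
    ring
  linear_combination ris α (m (Fin.last n)) * h

/-- Raising the exponent at one vertex. -/
lemma mono_add_single (α : ℝ) {n : ℕ} (G : SimpleGraph (Fin n)) (u : Fin n) (m : Fin n → ℕ) :
    mono α G (fun v => m v + if v = u then 1 else 0) = mono α G m * (vtxW α G u + m u) := by
  unfold mono
  rw [← Finset.mul_prod_erase _ _ (Finset.mem_univ u),
    ← Finset.mul_prod_erase Finset.univ (fun v => ris (vtxW α G v) (m v)) (Finset.mem_univ u)]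
  beta_reduce
  rw [if_pos rfl, ris_succ]
  have : ∏ x ∈ Finset.univ.erase u, ris (vtxW α G x) (m x + if x = u then 1 else 0) =
      ∏ x ∈ Finset.univ.erase u, ris (vtxW α G x) (m x) := by
    refine Finset.prod_congr rfl fun x hx => ?_
    rw [if_neg (Finset.ne_of_mem_erase hx), add_zero]
  rw [this]
  ring

lemma mono_mul_le {α : ℝ} (hα : 0 < α) {n : ℕ} {G : SimpleGraph (Fin n)} (hG : Good G)
    (m m' : Fin n → ℕ) : mono α G m * mono α G m' ≤ mono α G (fun v => m v + m' v) := by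
  unfold mono
  rw [← Finset.prod_mul_distrib]
  exact Finset.prod_le_prod
    (fun v _ => mul_nonneg (ris_pos (hG.vtxW_pos hα v) _).le (ris_pos (hG.vtxW_pos hα v) _).le)
    fun v _ => ris_mul_le (hG.vtxW_pos hα v) _ _

/-- The transition operator of the chain, acting on functions. -/
def stepOp (α : ℝ) {n : ℕ} (f : SimpleGraph (Fin (n + 1)) → ℝ) (G : SimpleGraph (Fin n)) : ℝ :=
  ∑ u, vtxW α G u / totW α n * f (extendTree G u)

/-- Expected value of a monomial after one step. -/
lemma stepOp_mono {α : ℝ} (hα : 0 < α) {n : ℕ} (hn : 3 ≤ n) {G : SimpleGraph (Fin n)}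
    (hG : Good G) (m : Fin (n + 1) → ℕ) :
    stepOp α (fun T => mono α T m) G =
      ris α (m (Fin.last n)) * ((1 + (∑ v : Fin n, (m v.castSucc : ℝ)) / totW α n) *
        mono α G (fun v => m v.castSucc)) := by
  have hZ := (totW_pos hα hn).ne'
  have : ∀ u, vtxW α G u / totW α n * mono α (extendTree G u) m =
      ris α (m (Fin.last n)) * mono α G (fun v => m v.castSucc) / totW α n *
        (vtxW α G u + m u.castSucc) := by
    intro u
    rw [div_mul_eq_mul_div, mono_extend]
    ring
  simp only [stepOp, this]
  rw [← Finset.mul_sum, Finset.sum_add_distrib, hG.sum_vtxW]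
  field_simp

/-! ### Observables and their one-step recursion -/

/-- The exponent vector on vertices obtained by pushing `ℓ` forward along `f`. -/
def expo {r n : ℕ} (f : Fin r → Fin n) (ℓ : Fin r → ℕ) (v : Fin n) : ℕ :=
  ∑ i, if f i = v then ℓ i else 0

lemma sum_expo {r n : ℕ} (f : Fin r → Fin n) (ℓ : Fin r → ℕ) : ∑ v, expo f ℓ v = ∑ i, ℓ i := by
  unfold expo
  rw [Finset.sum_comm]
  simp

/-- The observable with pattern function `q` and exponents `ℓ`: the sum over injective maps
`f : Fin r → V(T)` of `q`, evaluated at the graph induced by `f`, times the monomial with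
exponents `ℓ` along `f`. -/
def obsH (α : ℝ) {r : ℕ} (q : SimpleGraph (Fin r) → ℝ) (ℓ : Fin r → ℕ) {n : ℕ}
    (T : SimpleGraph (Fin n)) : ℝ :=
  ∑ f : Fin r → Fin n,
    if Function.Injective f then q (T.comap f) * mono α T (expo f ℓ) else 0

lemma sum_avoid_last {r n : ℕ} (A : (Fin r → Fin (n + 1)) → ℝ) :
    ∑ f, (if ∀ j, f j ≠ Fin.last n then A f else 0) =
      ∑ g : Fin r → Fin n, A (fun j => (g j).castSucc) := by
  symm
  refine Finset.sum_of_injOn (fun g j => (g j).castSucc) ?_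
    (fun _ _ => Finset.mem_coe.2 (Finset.mem_univ _)) ?_ ?_
  · intro g _ g' _ h
    funext j
    exact Fin.castSucc_injective n (congrFun h j)
  · intro f _ hf
    rw [if_neg]
    intro h
    apply hf
    choose g hg using fun j => Fin.exists_castSucc_eq.2 (h j)
    exact ⟨g, by simp, funext hg⟩
  · intro g _
    rw [if_pos fun j => (Fin.castSucc_lt_last _).ne]

lemma injective_insertNth_last {r n : ℕ} (i : Fin (r + 1)) (g : Fin r → Fin (n + 1)) :
    Function.Injective (i.insertNth (α := fun _ => Fin (n + 1)) (Fin.last n) g) ↔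
      (∀ j, g j ≠ Fin.last n) ∧ Function.Injective g := by
  constructor
  · intro h
    constructor
    · intro j hj
      have : i.insertNth (α := fun _ => Fin (n + 1)) (Fin.last n) g (i.succAbove j) =
          i.insertNth (α := fun _ => Fin (n + 1)) (Fin.last n) g i := by simp [hj]
      exact Fin.succAbove_ne i j (h this)
    · intro a b hab
      have : i.insertNth (α := fun _ => Fin (n + 1)) (Fin.last n) g (i.succAbove a) =
          i.insertNth (α := fun _ => Fin (n + 1)) (Fin.last n) g (i.succAbove b) := by simp [hab]
      exact Fin.succAbove_right_injective (h this)
  · rintro ⟨h1, h2⟩ a b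
    refine Fin.succAboveCases i ?_ (fun a => ?_) a <;>
      refine Fin.succAboveCases i ?_ (fun b => ?_) b
    · simp
    · simpa using fun h => h1 b h.symm
    · simpa using fun h => h1 a h
    · simpa using fun h => h2 h

/-- An injective map into `Fin (n + 1)` either avoids the last vertex, or takes it exactly once. -/
lemma sum_injective_succ {r n : ℕ} (F : (Fin (r + 1) → Fin (n + 1)) → ℝ) :
    ∑ f, (if Function.Injective f then F f else 0) =
      (∑ g : Fin (r + 1) → Fin n,
        if Function.Injective g then F (fun j => (g j).castSucc) else 0) +
      ∑ i : Fin (r + 1), ∑ g : Fin r → Fin n, if Function.Injective g then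
        F (i.insertNth (α := fun _ => Fin (n + 1)) (Fin.last n) (fun j => (g j).castSucc))
        else 0 := by
  have key : ∀ f : Fin (r + 1) → Fin (n + 1), (if Function.Injective f then F f else 0) =
      (if ∀ j, f j ≠ Fin.last n then (if Function.Injective f then F f else 0) else 0) +
      ∑ i, (if f i = Fin.last n then (if Function.Injective f then F f else 0) else 0) := by
    intro f
    by_cases hf : Function.Injective f
    · by_cases hl : ∀ j, f j ≠ Fin.last n
      · simp [hl]
      · rw [if_neg hl]
        push Not at hl
        obtain ⟨i, hi⟩ := hl
        have h1 : ∀ j, f j = Fin.last n ↔ j = i := fun j =>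
          ⟨fun h => hf (h.trans hi.symm), fun h => h ▸ hi⟩
        simp [h1]
    · simp [hf]
  have hcs : ∀ {s : ℕ} (g : Fin s → Fin n),
      Function.Injective (fun j => (g j).castSucc) ↔ Function.Injective g := fun g =>
    ⟨fun h => Function.Injective.of_comp (f := Fin.castSucc) h,
      fun h => (Fin.castSucc_injective n).comp h⟩
  rw [Finset.sum_congr rfl fun f _ => key f, Finset.sum_add_distrib, sum_avoid_last,
    Finset.sum_comm]
  congr 1
  · simp only [hcs]
  · refine Finset.sum_congr rfl fun i _ => ?_
    rw [← (Fin.insertNthEquiv (fun _ => Fin (n + 1)) i).sum_comp, Fintype.sum_prod_type]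
    rw [Finset.sum_eq_single (Fin.last n) (by intro b _ hb; simp [hb]) (by simp)]
    have hx : ∀ x : Fin r → Fin (n + 1),
        (if Function.Injective (i.insertNth (α := fun _ => Fin (n + 1)) (Fin.last n) x) then
          F (i.insertNth (α := fun _ => Fin (n + 1)) (Fin.last n) x) else 0) =
        if ∀ j, x j ≠ Fin.last n then (if Function.Injective x then
          F (i.insertNth (α := fun _ => Fin (n + 1)) (Fin.last n) x) else 0) else 0 := by
      intro x
      by_cases h1 : ∀ j, x j ≠ Fin.last n <;> by_cases h2 : Function.Injective x <;>
        simp [injective_insertNth_last, h1, h2]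
    simp only [Fin.insertNthEquiv_apply, Fin.insertNth_apply_same, if_true]
    refine (Finset.sum_congr rfl fun x _ => hx x).trans ?_
    rw [sum_avoid_last]
    simp only [hcs]

/-- The graph obtained from `K` by inserting a new vertex in position `i`, adjacent to the
vertices in `s`. -/
def attachAt {r : ℕ} (i : Fin (r + 1)) (K : SimpleGraph (Fin r)) (s : Fin r → Prop) :
    SimpleGraph (Fin (r + 1)) :=
  SimpleGraph.fromRel fun a b =>
    (∃ a' b', a = i.succAbove a' ∧ b = i.succAbove b' ∧ K.Adj a' b') ∨
      (a = i ∧ ∃ b', b = i.succAbove b' ∧ s b')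

lemma attachAt_adj {r : ℕ} (i : Fin (r + 1)) (K : SimpleGraph (Fin r)) (s : Fin r → Prop)
    (a b : Fin r) : (attachAt i K s).Adj (i.succAbove a) (i.succAbove b) ↔ K.Adj a b := by
  simp only [attachAt, SimpleGraph.fromRel_adj, Fin.succAbove_right_inj, ne_eq,
    Fin.succAbove_ne, false_and, or_false]
  constructor
  · rintro ⟨-, ⟨a', b', rfl, rfl, h⟩ | ⟨a', b', rfl, rfl, h⟩⟩
    · exact h
    · exact h.symm
  · intro h
    exact ⟨h.ne, Or.inl ⟨a, b, rfl, rfl, h⟩⟩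

lemma attachAt_adj_new {r : ℕ} (i : Fin (r + 1)) (K : SimpleGraph (Fin r)) (s : Fin r → Prop)
    (a : Fin r) : (attachAt i K s).Adj (i.succAbove a) i ↔ s a := by
  have h1 : ∀ x : Fin r, i ≠ i.succAbove x := fun x => (Fin.succAbove_ne i x).symm
  simp [attachAt, SimpleGraph.fromRel_adj, h1]

/-- The graph induced by a map that sends `i` to the new vertex, attached at `u`, and the other
indices to old vertices along `g`. -/
lemma comap_insertNth {r n : ℕ} (G : SimpleGraph (Fin n)) (u : Fin n) (i : Fin (r + 1))
    (g : Fin r → Fin n) :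
    (extendTree G u).comap
        (i.insertNth (α := fun _ => Fin (n + 1)) (Fin.last n) fun j => (g j).castSucc) =
      attachAt i (G.comap g) fun j => g j = u := by
  ext a b
  refine Fin.succAboveCases i ?_ (fun a => ?_) a <;>
    refine Fin.succAboveCases i ?_ (fun b => ?_) b
  · simp
  · rw [SimpleGraph.adj_comm, SimpleGraph.adj_comm (attachAt _ _ _), attachAt_adj_new]
    simp [extendTree_adj_last]
  · rw [attachAt_adj_new]
    simp [extendTree_adj_last]
  · rw [attachAt_adj]
    simp [extendTree_adj_castSucc]

lemma comap_castSucc {r n : ℕ} (G : SimpleGraph (Fin n)) (u : Fin n) (g : Fin r → Fin n) :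
    (extendTree G u).comap (fun j => (g j).castSucc) = G.comap g := by
  ext a b
  simp [extendTree_adj_castSucc]

lemma expo_castSucc {r n : ℕ} (g : Fin r → Fin n) (ℓ : Fin r → ℕ) (v : Fin n) :
    expo (fun j => (g j).castSucc) ℓ v.castSucc = expo g ℓ v := by
  simp [expo]

lemma expo_castSucc_last {r n : ℕ} (g : Fin r → Fin n) (ℓ : Fin r → ℕ) :
    expo (fun j => (g j).castSucc) ℓ (Fin.last n) = 0 := by
  simp [expo, (Fin.castSucc_lt_last _).ne]

lemma expo_insertNth {r n : ℕ} (i : Fin (r + 1)) (g : Fin r → Fin n) (ℓ : Fin (r + 1) → ℕ)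
    (v : Fin n) :
    expo (i.insertNth (α := fun _ => Fin (n + 1)) (Fin.last n) fun j => (g j).castSucc) ℓ
      v.castSucc = expo g (fun j => ℓ (i.succAbove j)) v := by
  simp [expo, Fin.sum_univ_succAbove _ i, (Fin.castSucc_lt_last _).ne']

lemma expo_insertNth_last {r n : ℕ} (i : Fin (r + 1)) (g : Fin r → Fin n)
    (ℓ : Fin (r + 1) → ℕ) :
    expo (i.insertNth (α := fun _ => Fin (n + 1)) (Fin.last n) fun j => (g j).castSucc) ℓ
      (Fin.last n) = ℓ i := by
  simp [expo, Fin.sum_univ_succAbove _ i, (Fin.castSucc_lt_last _).ne]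

lemma expo_add_single {r n : ℕ} (g : Fin r → Fin n) (ℓ : Fin r → ℕ) (j : Fin r) :
    expo g (fun x => ℓ x + if x = j then 1 else 0) =
      fun v => expo g ℓ v + if v = g j then 1 else 0 := by
  funext v
  unfold expo
  have : ∀ x, (if g x = v then ℓ x + (if x = j then 1 else 0) else 0) =
      (if g x = v then ℓ x else 0) + if x = j then (if v = g j then 1 else 0) else 0 := by
    intro x
    by_cases h : x = j
    · subst h
      by_cases h' : g x = v
      · simp [h']
      · simp [h', Ne.symm h']
    · simp [h]
  rw [Finset.sum_congr rfl fun x _ => this x, Finset.sum_add_distrib]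
  simp

lemma stepOp_sum (α : ℝ) {n : ℕ} {ι : Type*} (s : Finset ι)
    (F : ι → SimpleGraph (Fin (n + 1)) → ℝ) (G : SimpleGraph (Fin n)) :
    stepOp α (fun T => ∑ i ∈ s, F i T) G = ∑ i ∈ s, stepOp α (F i) G := by
  unfold stepOp
  rw [Finset.sum_comm]
  simp only [Finset.mul_sum]

lemma stepOp_add (α : ℝ) {n : ℕ} (f g : SimpleGraph (Fin (n + 1)) → ℝ)
    (G : SimpleGraph (Fin n)) :
    stepOp α (fun T => f T + g T) G = stepOp α f G + stepOp α g G := by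
  simp [stepOp, mul_add, Finset.sum_add_distrib]

lemma stepOp_ite (α : ℝ) {n : ℕ} (p : Prop) [Decidable p] (f : SimpleGraph (Fin (n + 1)) → ℝ)
    (G : SimpleGraph (Fin n)) :
    stepOp α (fun T => if p then f T else 0) G = if p then stepOp α f G else 0 := by
  split_ifs <;> simp [stepOp]

/-- Contribution of a map which avoids the new vertex. -/
lemma stepOp_old {α : ℝ} (hα : 0 < α) {n r : ℕ} (hn : 3 ≤ n) {G : SimpleGraph (Fin n)}
    (hG : Good G) (q : SimpleGraph (Fin r) → ℝ) (ℓ : Fin r → ℕ) (g : Fin r → Fin n) :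
    stepOp α (fun T => q (T.comap fun j => (g j).castSucc) *
        mono α T (expo (fun j => (g j).castSucc) ℓ)) G =
      (1 + (∑ i, (ℓ i : ℝ)) / totW α n) * (q (G.comap g) * mono α G (expo g ℓ)) := by
  have h := stepOp_mono hα hn hG (expo (fun j => (g j).castSucc) ℓ)
  simp only [expo_castSucc, expo_castSucc_last, ris_zero, one_mul] at h
  have hs : ∑ v, (expo g ℓ v : ℝ) = ∑ i, (ℓ i : ℝ) := by exact_mod_cast sum_expo g ℓ
  rw [hs] at h
  have : stepOp α (fun T => q (T.comap fun j => (g j).castSucc) *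
        mono α T (expo (fun j => (g j).castSucc) ℓ)) G =
      q (G.comap g) * stepOp α (fun T => mono α T (expo (fun j => (g j).castSucc) ℓ)) G := by
    simp only [stepOp, comap_castSucc, Finset.mul_sum]
    exact Finset.sum_congr rfl fun _ _ => by ring
  rw [this, h]
  ring

/-- Contribution of a map which sends `i` to the new vertex, and the other indices to old
vertices through `g`. The new vertex has one neighbour, so that the induced graph acquires either
an isolated vertex or a vertex attached to a single index `j`. -/
lemma stepOp_new {α : ℝ} (hα : 0 < α) {n r : ℕ} (hn : 3 ≤ n) {G : SimpleGraph (Fin n)}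
    (hG : Good G) (q : SimpleGraph (Fin (r + 1)) → ℝ) (ℓ : Fin (r + 1) → ℕ) (i : Fin (r + 1))
    (g : Fin r → Fin n) (hg : Function.Injective g) :
    stepOp α (fun T =>
        q (T.comap (i.insertNth (α := fun _ => Fin (n + 1)) (Fin.last n)
          fun j => (g j).castSucc)) *
        mono α T (expo (i.insertNth (α := fun _ => Fin (n + 1)) (Fin.last n)
          fun j => (g j).castSucc) ℓ)) G =
      ris α (ℓ i) * ((1 + (∑ j, (ℓ (i.succAbove j) : ℝ)) / totW α n) *
          (q (attachAt i (G.comap g) fun _ => False) *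
            mono α G (expo g fun j => ℓ (i.succAbove j))) +
        (totW α n)⁻¹ * ∑ j, (q (attachAt i (G.comap g) fun x => x = j) -
            q (attachAt i (G.comap g) fun _ => False)) *
          mono α G (expo g fun x => ℓ (i.succAbove x) + if x = j then 1 else 0)) := by
  set K := G.comap g
  set m := expo g fun j => ℓ (i.succAbove j) with hm
  have hZ := (totW_pos hα hn).ne'
  have hq : ∀ u, q (attachAt i K fun j => g j = u) = q (attachAt i K fun _ => False) +
      ∑ j, if g j = u then
        q (attachAt i K fun x => x = j) - q (attachAt i K fun _ => False) else 0 := by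
    intro u
    by_cases h : ∃ j, g j = u
    · obtain ⟨j, rfl⟩ := h
      simp [hg.eq_iff]
    · push Not at h
      simp [h]
  have hterm : ∀ u, vtxW α G u / totW α n * (q (attachAt i K fun j => g j = u) *
      mono α (extendTree G u) (expo (i.insertNth (α := fun _ => Fin (n + 1)) (Fin.last n)
          fun j => (g j).castSucc) ℓ)) =
      ris α (ℓ i) * (totW α n)⁻¹ * ((q (attachAt i K fun _ => False) * mono α G m) *
          (vtxW α G u + m u) +
        ∑ j, if g j = u then (q (attachAt i K fun x => x = j) -
          q (attachAt i K fun _ => False)) * (mono α G m * (vtxW α G u + m u)) else 0) := by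
    intro u
    have h := mono_extend α G u (expo (i.insertNth (α := fun _ => Fin (n + 1)) (Fin.last n)
          fun j => (g j).castSucc) ℓ)
    simp only [expo_insertNth, expo_insertNth_last] at h
    rw [← hm] at h
    have h2 : (∑ j, if g j = u then (q (attachAt i K fun x => x = j) -
          q (attachAt i K fun _ => False)) * (mono α G m * (vtxW α G u + m u)) else 0) =
        (∑ j, if g j = u then (q (attachAt i K fun x => x = j) -
          q (attachAt i K fun _ => False)) else 0) * (mono α G m * (vtxW α G u + m u)) := by
      rw [Finset.sum_mul]
      simp only [ite_mul, zero_mul]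
    rw [hq, h2]
    rw [div_eq_mul_inv]
    linear_combination (totW α n)⁻¹ * (q (attachAt i K fun _ => False) +
      ∑ j, if g j = u then
        q (attachAt i K fun x => x = j) - q (attachAt i K fun _ => False) else 0) * h
  simp only [stepOp, comap_insertNth]
  rw [Finset.sum_congr rfl fun u _ => hterm u, ← Finset.mul_sum, Finset.sum_add_distrib,
    ← Finset.mul_sum, Finset.sum_add_distrib, hG.sum_vtxW, Finset.sum_comm]
  have hs : ∑ v, (m v : ℝ) = ∑ j, (ℓ (i.succAbove j) : ℝ) := by
    exact_mod_cast sum_expo g fun j => ℓ (i.succAbove j)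
  rw [hs]
  have hj : ∀ j, mono α G (expo g fun x => ℓ (i.succAbove x) + if x = j then 1 else 0) =
      mono α G m * (vtxW α G (g j) + m (g j)) := by
    intro j
    rw [expo_add_single, ← hm, mono_add_single]
  simp only [hj, Finset.sum_ite_eq, Finset.mem_univ, if_true]
  field_simp

/-- The one-step recursion: up to the factor `1 + |ℓ| / Z_n`, the observables of order `r + 1` are
propagated modulo observables of order `r`, whose exponents are at least as large. -/
lemma stepOp_obsH {α : ℝ} (hα : 0 < α) {n r : ℕ} (hn : 3 ≤ n) {G : SimpleGraph (Fin n)}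
    (hG : Good G) (q : SimpleGraph (Fin (r + 1)) → ℝ) (ℓ : Fin (r + 1) → ℕ) :
    stepOp α (fun T => obsH α q ℓ T) G =
      (1 + (∑ i, (ℓ i : ℝ)) / totW α n) * obsH α q ℓ G +
      ∑ i, ris α (ℓ i) * ((1 + (∑ j, (ℓ (i.succAbove j) : ℝ)) / totW α n) *
          obsH α (fun K => q (attachAt i K fun _ => False)) (fun j => ℓ (i.succAbove j)) G +
        (totW α n)⁻¹ * ∑ j, obsH α (fun K => q (attachAt i K fun x => x = j) -
            q (attachAt i K fun _ => False))
          (fun x => ℓ (i.succAbove x) + if x = j then 1 else 0) G) := by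
  have h1 : (fun T : SimpleGraph (Fin (n + 1)) => obsH α q ℓ T) = fun T =>
      (∑ g : Fin (r + 1) → Fin n, if Function.Injective g then
        q (T.comap fun j => (g j).castSucc) *
          mono α T (expo (fun j => (g j).castSucc) ℓ) else 0) +
      ∑ i : Fin (r + 1), ∑ g : Fin r → Fin n, if Function.Injective g then
        q (T.comap (i.insertNth (α := fun _ => Fin (n + 1)) (Fin.last n)
          fun j => (g j).castSucc)) *
        mono α T (expo (i.insertNth (α := fun _ => Fin (n + 1)) (Fin.last n)
          fun j => (g j).castSucc) ℓ) else 0 := by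
    funext T
    exact sum_injective_succ fun f => q (T.comap f) * mono α T (expo f ℓ)
  rw [h1, stepOp_add, stepOp_sum, stepOp_sum]
  congr 1
  · unfold obsH
    rw [Finset.mul_sum]
    refine Finset.sum_congr rfl fun g _ => ?_
    rw [stepOp_ite, stepOp_old hα hn hG]
    split_ifs <;> simp
  · refine Finset.sum_congr rfl fun i _ => ?_
    rw [stepOp_sum]
    simp only [stepOp_ite]
    unfold obsH
    rw [Finset.sum_comm (s := Finset.univ (α := Fin r)), Finset.mul_sum, Finset.mul_sum,
      ← Finset.sum_add_distrib, Finset.mul_sum]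
    refine Finset.sum_congr rfl fun g _ => ?_
    by_cases hg : Function.Injective g
    · simp only [if_pos hg]
      rw [stepOp_new hα hn hG q ℓ i g hg]
    · simp [hg]

/-! ### Chains of signed measures -/

/-- The sum of `f` against the signed weights `μ`. -/
def expect {n : ℕ} (μ f : SimpleGraph (Fin n) → ℝ) : ℝ := ∑ G, μ G * f G

/-- A family of signed measures of total mass `c`, carried by good graphs and evolving, from the
size `n₀` on, according to the dynamics of the chain. -/
structure SChain (α : ℝ) (n₀ : ℕ) (c : ℝ) (μ : (n : ℕ) → SimpleGraph (Fin n) → ℝ) : Prop where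
  good : ∀ n, n₀ ≤ n → ∀ G, μ n G ≠ 0 → Good G
  mass : ∀ n, n₀ ≤ n → ∑ G, μ n G = c
  step : ∀ n, n₀ ≤ n → ∀ f, expect (μ (n + 1)) f = expect (μ n) (stepOp α f)

lemma SChain.mono_start {α : ℝ} {n₀ n₁ : ℕ} {c : ℝ} {μ : (n : ℕ) → SimpleGraph (Fin n) → ℝ}
    (h : SChain α n₀ c μ) (hn : n₀ ≤ n₁) : SChain α n₁ c μ :=
  ⟨fun n hn' => h.good n (hn.trans hn'), fun n hn' => h.mass n (hn.trans hn'),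
    fun n hn' => h.step n (hn.trans hn')⟩

lemma expect_sub_left {n : ℕ} (μ ν f : SimpleGraph (Fin n) → ℝ) :
    expect (fun G => μ G - ν G) f = expect μ f - expect ν f := by
  simp [expect, sub_mul, Finset.sum_sub_distrib]

lemma SChain.sub {α : ℝ} {n₀ : ℕ} {c c' : ℝ} {μ ν : (n : ℕ) → SimpleGraph (Fin n) → ℝ}
    (hμ : SChain α n₀ c μ) (hν : SChain α n₀ c' ν) :
    SChain α n₀ (c - c') (fun n G => μ n G - ν n G) := by
  refine ⟨fun n hn G h => ?_, fun n hn => ?_, fun n hn f => ?_⟩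
  · by_cases h0 : μ n G = 0
    · exact hν.good n hn G fun h1 => h (by rw [h0, h1, sub_zero])
    · exact hμ.good n hn G h0
  · rw [Finset.sum_sub_distrib, hμ.mass n hn, hν.mass n hn]
  · rw [expect_sub_left, expect_sub_left, hμ.step n hn, hν.step n hn]

lemma SChain.expect_congr {α : ℝ} {n₀ : ℕ} {c : ℝ} {μ : (n : ℕ) → SimpleGraph (Fin n) → ℝ}
    (h : SChain α n₀ c μ) {n : ℕ} (hn : n₀ ≤ n) {f g : SimpleGraph (Fin n) → ℝ}
    (hfg : ∀ G, Good G → f G = g G) : expect (μ n) f = expect (μ n) g := by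
  refine Finset.sum_congr rfl fun G _ => ?_
  by_cases h0 : μ n G = 0
  · simp [h0]
  · rw [hfg G (h.good n hn G h0)]

lemma SChain.expect_le {α : ℝ} {n₀ : ℕ} {c : ℝ} {μ : (n : ℕ) → SimpleGraph (Fin n) → ℝ}
    (h : SChain α n₀ c μ) {n : ℕ} (hn : n₀ ≤ n) (hpos : ∀ G, 0 ≤ μ n G)
    {f g : SimpleGraph (Fin n) → ℝ}
    (hfg : ∀ G, Good G → f G ≤ g G) : expect (μ n) f ≤ expect (μ n) g := by
  refine Finset.sum_le_sum fun G _ => ?_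
  by_cases h0 : μ n G = 0
  · simp [h0]
  · exact mul_le_mul_of_nonneg_left (hfg G (h.good n hn G h0)) (hpos G)

lemma expect_add {n : ℕ} (μ f g : SimpleGraph (Fin n) → ℝ) :
    expect μ (fun G => f G + g G) = expect μ f + expect μ g := by
  simp [expect, mul_add, Finset.sum_add_distrib]

lemma expect_const_mul {n : ℕ} (μ f : SimpleGraph (Fin n) → ℝ) (a : ℝ) :
    expect μ (fun G => a * f G) = a * expect μ f := by
  simp only [expect, Finset.mul_sum]
  exact Finset.sum_congr rfl fun _ _ => by ring

lemma expect_sum {n : ℕ} {ι : Type*} (s : Finset ι) (μ : SimpleGraph (Fin n) → ℝ)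
    (F : ι → SimpleGraph (Fin n) → ℝ) :
    expect μ (fun G => ∑ i ∈ s, F i G) = ∑ i ∈ s, expect μ (F i) := by
  simp only [expect, Finset.mul_sum]
  exact Finset.sum_comm

/-- The growth factor `∏_{n₀ ≤ j < n} (1 + x / Z_j)`. -/
def growth (α : ℝ) (n₀ : ℕ) (x : ℝ) (n : ℕ) : ℝ :=
  ∏ j ∈ Finset.Ico n₀ n, (1 + x / totW α j)

lemma growth_self (α : ℝ) (n₀ : ℕ) (x : ℝ) : growth α n₀ x n₀ = 1 := by simp [growth]

lemma growth_succ (α : ℝ) {n₀ n : ℕ} (hn : n₀ ≤ n) (x : ℝ) :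
    growth α n₀ x (n + 1) = (1 + x / totW α n) * growth α n₀ x n := by
  unfold growth
  rw [Finset.prod_Ico_succ_top hn, mul_comm]

lemma growth_pos {α : ℝ} (hα : 0 < α) {n₀ : ℕ} (h3 : 3 ≤ n₀) {x : ℝ} (hx : 0 ≤ x) (n : ℕ) :
    0 < growth α n₀ x n := by
  refine Finset.prod_pos fun j hj => ?_
  have := totW_pos hα (h3.trans (Finset.mem_Ico.1 hj).1)
  positivity

lemma growth_le {α : ℝ} (hα : 0 < α) {n₀ : ℕ} (h3 : 3 ≤ n₀) {x y : ℝ} (hx : 0 ≤ x)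
    (hxy : x ≤ y) (n : ℕ) : growth α n₀ x n ≤ growth α n₀ y n := by
  refine Finset.prod_le_prod (fun j hj => ?_) fun j hj => ?_ <;>
    have := totW_pos hα (h3.trans (Finset.mem_Ico.1 hj).1)
  · positivity
  · gcongr

/-- Observables of order `0` are constant. -/
lemma SChain.expect_obsH_zero {α : ℝ} {n₀ : ℕ} {δ : (n : ℕ) → SimpleGraph (Fin n) → ℝ}
    (h : SChain α n₀ 0 δ) {n : ℕ} (hn : n₀ ≤ n) (q : SimpleGraph (Fin 0) → ℝ) (ℓ : Fin 0 → ℕ) :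
    expect (δ n) (obsH α q ℓ) = 0 := by
  have : ∀ G : SimpleGraph (Fin n), obsH α q ℓ G = q ⊥ := by
    intro G
    have h1 : ∀ f : Fin 0 → Fin n, G.comap f = ⊥ := fun f => Subsingleton.elim _ _
    have h2 : ∀ f : Fin 0 → Fin n, Function.Injective f :=
      fun f => Function.injective_of_subsingleton f
    simp [obsH, h1, h2, mono, expo, ris_zero]
  simp only [expect, this]
  rw [← Finset.sum_mul, h.mass _ hn, zero_mul]

/-- A signed chain which kills the observables of all orders `< r` keeps doing so. -/
lemma SChain.kill {α : ℝ} (hα : 0 < α) {n₀ : ℕ} (h3 : 3 ≤ n₀)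
    {δ : (n : ℕ) → SimpleGraph (Fin n) → ℝ} (h : SChain α n₀ 0 δ) (ℓ₀ r : ℕ)
    (hr : ∀ r' < r, ∀ (q : SimpleGraph (Fin r') → ℝ) (ℓ : Fin r' → ℕ), (∀ i, ℓ₀ ≤ ℓ i) →
      expect (δ n₀) (obsH α q ℓ) = 0) {n : ℕ} (hn : n₀ ≤ n) :
    ∀ r' < r, ∀ (q : SimpleGraph (Fin r') → ℝ) (ℓ : Fin r' → ℕ), (∀ i, ℓ₀ ≤ ℓ i) →
      expect (δ n) (obsH α q ℓ) = 0 := by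
  induction n, hn using Nat.le_induction with
  | base => exact hr
  | succ n hn ih =>
    rintro (_ | s) hs q ℓ hℓ
    · exact h.expect_obsH_zero (by omega) q ℓ
    · rw [h.step n hn, h.expect_congr hn fun G hG => stepOp_obsH hα (h3.trans hn) hG q ℓ,
        expect_add, expect_const_mul, ih _ hs q ℓ hℓ, expect_sum, mul_zero, zero_add]
      refine Finset.sum_eq_zero fun i _ => ?_
      rw [expect_const_mul, expect_add, expect_const_mul, expect_const_mul, expect_sum,
        ih s (by omega) _ _ fun j => hℓ _, mul_zero, zero_add]
      refine mul_eq_zero_of_right _ (mul_eq_zero_of_right _ (Finset.sum_eq_zero fun j _ => ?_))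
      exact ih s (by omega) _ _ fun j => le_add_right (hℓ _)

/-- For the smallest order which is not killed, the observables are eigenfunctions. -/
lemma SChain.expect_obsH {α : ℝ} (hα : 0 < α) {n₀ : ℕ} (h3 : 3 ≤ n₀)
    {δ : (n : ℕ) → SimpleGraph (Fin n) → ℝ} (h : SChain α n₀ 0 δ) (ℓ₀ r : ℕ)
    (hr : ∀ r' < r + 1, ∀ (q : SimpleGraph (Fin r') → ℝ) (ℓ : Fin r' → ℕ), (∀ i, ℓ₀ ≤ ℓ i) →
      expect (δ n₀) (obsH α q ℓ) = 0)
    (q : SimpleGraph (Fin (r + 1)) → ℝ) (ℓ : Fin (r + 1) → ℕ) (hℓ : ∀ i, ℓ₀ ≤ ℓ i)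
    {n : ℕ} (hn : n₀ ≤ n) :
    expect (δ n) (obsH α q ℓ) =
      growth α n₀ (∑ i, (ℓ i : ℝ)) n * expect (δ n₀) (obsH α q ℓ) := by
  induction n, hn using Nat.le_induction with
  | base => rw [growth_self, one_mul]
  | succ n hn ih =>
    have hk := h.kill hα h3 ℓ₀ (r + 1) hr hn
    rw [h.step n hn, h.expect_congr hn fun G hG => stepOp_obsH hα (h3.trans hn) hG q ℓ,
      expect_add, expect_const_mul, ih, expect_sum, growth_succ α hn, mul_assoc]
    refine add_eq_left.2 (Finset.sum_eq_zero fun i _ => ?_)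
    rw [expect_const_mul, expect_add, expect_const_mul, expect_const_mul, expect_sum,
      hk r (by omega) _ _ fun j => hℓ _, mul_zero, zero_add]
    refine mul_eq_zero_of_right _ (mul_eq_zero_of_right _ (Finset.sum_eq_zero fun j _ => ?_))
    exact hk r (by omega) _ _ fun j => le_add_right (hℓ _)

/-! ### Second moments -/

/-- The sum of all monomials of total degree `L` whose nonzero exponents are at least `ℓ₀`;
exponents are capped at `B` only to make the sum finite. -/
def obsK (α : ℝ) (ℓ₀ B L : ℕ) {n : ℕ} (T : SimpleGraph (Fin n)) : ℝ :=
  ∑ m : Fin n → Fin (B + 1),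
    if (∀ v, (m v : ℕ) = 0 ∨ ℓ₀ ≤ m v) ∧ ∑ v, (m v : ℕ) = L then
      mono α T (fun v => (m v : ℕ)) else 0

lemma obsK_nonneg {α : ℝ} (hα : 0 < α) (ℓ₀ B L : ℕ) {n : ℕ} {G : SimpleGraph (Fin n)}
    (hG : Good G) : 0 ≤ obsK α ℓ₀ B L G := by
  refine Finset.sum_nonneg fun m _ => ?_
  split_ifs
  · exact (mono_pos hα hG _).le
  · rfl

/-- One-step recursion for `obsK`: the index `b` is the exponent of the new vertex. -/
lemma stepOp_obsK {α : ℝ} (hα : 0 < α) {n : ℕ} (hn : 3 ≤ n) {G : SimpleGraph (Fin n)}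
    (hG : Good G) (ℓ₀ B L : ℕ) :
    stepOp α (fun T => obsK α ℓ₀ B L T) G =
      ∑ b : Fin (B + 1), if ((b : ℕ) = 0 ∨ ℓ₀ ≤ b) ∧ (b : ℕ) ≤ L then
        ris α b * ((1 + ((L - b : ℕ) : ℝ) / totW α n) * obsK α ℓ₀ B (L - b) G) else 0 := by
  unfold obsK
  rw [stepOp_sum]
  simp only [stepOp_ite]
  rw [← (Fin.snocEquiv (fun _ => Fin (B + 1))).sum_comp, Fintype.sum_prod_type]
  refine Finset.sum_congr rfl fun b _ => ?_
  have hcond : ∀ m : Fin n → Fin (B + 1),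
      ((∀ v, ((Fin.snocEquiv (fun _ => Fin (B + 1)) (b, m)) v : ℕ) = 0 ∨
          ℓ₀ ≤ (Fin.snocEquiv (fun _ => Fin (B + 1)) (b, m)) v) ∧
        ∑ v, ((Fin.snocEquiv (fun _ => Fin (B + 1)) (b, m)) v : ℕ) = L) ↔
      (((b : ℕ) = 0 ∨ ℓ₀ ≤ b) ∧ (b : ℕ) ≤ L) ∧
        ((∀ v, (m v : ℕ) = 0 ∨ ℓ₀ ≤ m v) ∧ ∑ v, (m v : ℕ) = L - b) := by
    intro m
    rw [Fin.sum_univ_castSucc]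
    simp only [Fin.snocEquiv_apply, Fin.snoc_castSucc, Fin.snoc_last, Fin.forall_fin_succ']
    constructor
    · rintro ⟨⟨h1, h2⟩, h3⟩
      exact ⟨⟨h2, by omega⟩, h1, by omega⟩
    · rintro ⟨⟨h1, h2⟩, h3, h4⟩
      exact ⟨⟨h3, h1⟩, by omega⟩
  by_cases hb : ((b : ℕ) = 0 ∨ ℓ₀ ≤ b) ∧ (b : ℕ) ≤ L
  · rw [if_pos hb, Finset.mul_sum, Finset.mul_sum]
    refine Finset.sum_congr rfl fun m _ => ?_
    by_cases hm : (∀ v, (m v : ℕ) = 0 ∨ ℓ₀ ≤ m v) ∧ ∑ v, (m v : ℕ) = L - b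
    · rw [if_pos ((hcond m).2 ⟨hb, hm⟩), if_pos hm, stepOp_mono hα hn hG]
      have hs : ∑ v, ((m v : ℕ) : ℝ) = ((L - b : ℕ) : ℝ) := by exact_mod_cast hm.2
      simp only [Fin.snocEquiv_apply, Fin.snoc_castSucc, Fin.snoc_last, hs]
    · rw [if_neg fun h => hm ((hcond m).1 h).2, if_neg hm]
      simp
  · rw [if_neg hb]
    exact Finset.sum_eq_zero fun m _ => if_neg fun h => hb ((hcond m).1 h).1

/-- A perturbed linear recursion keeps the growth rate `y` if the perturbation grows at a rate `x`
with `x + 1 + α < y`. The potential `(Z_n + y) · growth x` telescopes the perturbation. -/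
lemma seq_bound {α : ℝ} (hα : 0 < α) {n₀ : ℕ} (h3 : 3 ≤ n₀) {x y D : ℝ} (hx : 0 ≤ x)
    (hxy : x + 1 + α < y) (hD : 0 ≤ D) (a : ℕ → ℝ)
    (ha : ∀ n, n₀ ≤ n → a (n + 1) ≤ (1 + y / totW α n) * a n + D * growth α n₀ x (n + 1)) :
    ∃ C, ∀ n, n₀ ≤ n → a n ≤ C * growth α n₀ y n := by
  set e := D / (y - x - 1 - α) with he
  have hpos : 0 < y - x - 1 - α := by linarith
  have he0 : 0 ≤ e := by positivity
  have heD : e * (y - x - 1 - α) = D := by rw [he]; field_simp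
  have key : ∀ n, n₀ ≤ n → a n ≤ (a n₀ + e * (totW α n₀ + y)) * growth α n₀ y n -
      e * (totW α n + y) * growth α n₀ x n := by
    intro n hn
    induction n, hn using Nat.le_induction with
    | base => simp [growth_self]
    | succ n hn ih =>
      have hZ := totW_pos hα (h3.trans hn)
      have hg := growth_pos hα h3 hx n
      have h1 := ha n hn
      have hy : 0 ≤ y := by linarith
      have h2 : (1 + y / totW α n) * a n ≤ (1 + y / totW α n) *
        ((a n₀ + e * (totW α n₀ + y)) * growth α n₀ y n -
          e * (totW α n + y) * growth α n₀ x n) :=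
        mul_le_mul_of_nonneg_left ih (by positivity)
      rw [growth_succ α hn, growth_succ α hn, totW_succ]
      rw [growth_succ α hn] at h1
      have h4 : D * (1 + x / totW α n) + e * (totW α n + (1 + α) + y) * (1 + x / totW α n) ≤
          (1 + y / totW α n) * (e * (totW α n + y)) := by
        have h5 : (1 + y / totW α n) * (e * (totW α n + y)) -
            (D * (1 + x / totW α n) + e * (totW α n + (1 + α) + y) * (1 + x / totW α n)) =
            e * ((y - x - 1 - α) * (y - x) + (y - x) * (1 + α)) / totW α n := by
          rw [← heD]
          field_simp
          ring
        have h6 : 0 ≤ e * ((y - x - 1 - α) * (y - x) + (y - x) * (1 + α)) / totW α n := by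
          have : 0 ≤ y - x := by linarith
          positivity
        linarith
      nlinarith [mul_le_mul_of_nonneg_right h4 hg.le]
  refine ⟨_, fun n hn => (key n hn).trans (sub_le_self _ ?_)⟩
  have hZ := totW_pos hα (h3.trans hn)
  have hg := growth_pos hα h3 hx n
  have hy : 0 ≤ y := by linarith
  positivity

/-- The expectation of `obsK` of degree `L` grows no faster than `growth L`, as soon as
`ℓ₀ > 1 + α`. -/
lemma SChain.expect_obsK_le {α : ℝ} (hα : 0 < α) {n₀ : ℕ} (h3 : 3 ≤ n₀) {c : ℝ}
    {μ : (n : ℕ) → SimpleGraph (Fin n) → ℝ} (h : SChain α n₀ c μ)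
    {ℓ₀ : ℕ} (hℓ : 1 + α < ℓ₀) (B L : ℕ) :
    ∃ C, ∀ n, n₀ ≤ n → expect (μ n) (obsK α ℓ₀ B L) ≤ C * growth α n₀ L n := by
  induction L using Nat.strong_induction_on with
  | _ L ih =>
  have hℓ0 : 0 < ℓ₀ := by
    have : (0 : ℝ) < ℓ₀ := by linarith
    exact_mod_cast this
  have hstep : ∀ n, n₀ ≤ n → expect (μ (n + 1)) (obsK α ℓ₀ B L) =
      (1 + (L : ℝ) / totW α n) * expect (μ n) (obsK α ℓ₀ B L) +
      ∑ b : Fin B, if ℓ₀ ≤ (b : ℕ) + 1 ∧ (b : ℕ) + 1 ≤ L then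
        ris α (b + 1) * ((1 + ((L - (b + 1) : ℕ) : ℝ) / totW α n) *
          expect (μ n) (obsK α ℓ₀ B (L - (b + 1)))) else 0 := by
    intro n hn
    rw [h.step n hn, h.expect_congr hn fun G hG => stepOp_obsK hα (h3.trans hn) hG ℓ₀ B L,
      expect_sum, Fin.sum_univ_succ]
    congr 1
    · simp [ris_zero, expect_const_mul]
    · refine Finset.sum_congr rfl fun b _ => ?_
      by_cases hb : ℓ₀ ≤ (b : ℕ) + 1 ∧ (b : ℕ) + 1 ≤ L
      · simp [hb, expect_const_mul]
      · have hb' : ¬(ℓ₀ ≤ (b : ℕ) + 1 ∧ (b : ℕ) < L) := hb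
        simp [hb', expect]
  have hC : ∀ b : ℕ, ∃ C : ℝ, b + 1 ≤ L → ∀ n, n₀ ≤ n →
      expect (μ n) (obsK α ℓ₀ B (L - (b + 1))) ≤ C * growth α n₀ (L - (b + 1) : ℕ) n := by
    intro b
    by_cases hb : b + 1 ≤ L
    · obtain ⟨C, hC⟩ := ih (L - (b + 1)) (by omega)
      exact ⟨C, fun _ => hC⟩
    · exact ⟨0, fun h => absurd h hb⟩
  choose C hC using hC
  rcases lt_or_ge L ℓ₀ with hL | hL
  · refine ⟨expect (μ n₀) (obsK α ℓ₀ B L), fun n hn => ?_⟩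
    induction n, hn using Nat.le_induction with
    | base => rw [growth_self, mul_one]
    | succ n hn ihn =>
      have hZ := totW_pos hα (h3.trans hn)
      rw [hstep n hn, growth_succ α hn, Finset.sum_eq_zero, add_zero]
      · calc _ ≤ (1 + (L : ℝ) / totW α n) * _ :=
              mul_le_mul_of_nonneg_left ihn (by positivity)
          _ = _ := by ring
      · intro b _
        rw [if_neg]
        omega
  · have hx : (0 : ℝ) ≤ ((L - ℓ₀ : ℕ) : ℝ) := by positivity
    refine seq_bound hα h3 (x := ((L - ℓ₀ : ℕ) : ℝ)) (D := ∑ b : Fin B, ris α (b + 1) * |C b|)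
      hx ?_ (Finset.sum_nonneg fun b _ => mul_nonneg (ris_pos hα _).le (abs_nonneg _))
      _ fun n hn => ?_
    · rw [Nat.cast_sub hL]
      linarith
    · rw [hstep n hn, Finset.sum_mul]
      gcongr with b
      have hZ := totW_pos hα (h3.trans hn)
      split_ifs with hb
      · have h1 := hC b hb.2 n hn
        have h2 : growth α n₀ (L - (b + 1) : ℕ) (n + 1) ≤ growth α n₀ (L - ℓ₀ : ℕ) (n + 1) := by
          apply growth_le hα h3 (by positivity)
          have : L - ((b : ℕ) + 1) ≤ L - ℓ₀ := by omega
          exact_mod_cast this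
        have h3' := growth_pos hα h3 (x := ((L - (b + 1) : ℕ) : ℝ)) (by positivity) (n + 1)
        have hr := (ris_pos hα ((b : ℕ) + 1)).le
        rw [mul_assoc]
        apply mul_le_mul_of_nonneg_left _ hr
        calc _ ≤ (1 + ((L - (b + 1) : ℕ) : ℝ) / totW α n) *
              (C b * growth α n₀ (L - (b + 1) : ℕ) n) :=
              mul_le_mul_of_nonneg_left h1 (by positivity)
          _ = C b * growth α n₀ (L - (b + 1) : ℕ) (n + 1) := by
              rw [growth_succ α hn]; ring
          _ ≤ |C b| * growth α n₀ (L - (b + 1) : ℕ) (n + 1) :=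
              mul_le_mul_of_nonneg_right (le_abs_self _) h3'.le
          _ ≤ _ := mul_le_mul_of_nonneg_left h2 (abs_nonneg _)
      · have := growth_pos hα h3 hx (n + 1)
        have hr := (ris_pos hα ((b : ℕ) + 1)).le
        positivity

lemma expo_eq_zero_or {r n ℓ₀ : ℕ} (f : Fin r → Fin n) {ℓ : Fin r → ℕ} (hℓ : ∀ i, ℓ₀ ≤ ℓ i)
    (v : Fin n) : expo f ℓ v = 0 ∨ ℓ₀ ≤ expo f ℓ v := by
  by_cases h : ∃ i, f i = v
  · obtain ⟨i, hi⟩ := h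
    right
    refine (hℓ i).trans ?_
    have := Finset.single_le_sum (f := fun j => if f j = v then ℓ j else 0)
      (fun j _ => Nat.zero_le _) (Finset.mem_univ i)
    simpa [hi, expo] using this
  · push Not at h
    left
    simp [expo, h]

lemma expo_ne_zero {r n ℓ₀ : ℕ} (h0 : 0 < ℓ₀) (f : Fin r → Fin n) {ℓ : Fin r → ℕ}
    (hℓ : ∀ i, ℓ₀ ≤ ℓ i) (i : Fin r) : expo f ℓ (f i) ≠ 0 := by
  have := Finset.single_le_sum (f := fun j => if f j = f i then ℓ j else 0)
      (fun j _ => Nat.zero_le _) (Finset.mem_univ i)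
  have h1 := hℓ i
  simp only [if_true] at this
  unfold expo
  omega

lemma expo_le_sum {r n : ℕ} (f : Fin r → Fin n) (ℓ : Fin r → ℕ) (v : Fin n) :
    expo f ℓ v ≤ ∑ i, ℓ i := by
  rw [← sum_expo f]
  exact Finset.single_le_sum (fun _ _ => Nat.zero_le _) (Finset.mem_univ v)

/-- The square of an observable is dominated by `obsK`. Expanding the square gives monomials with
exponents `expo f ℓ + expo g ℓ`, and each exponent vector arises from boundedly many pairs
`(f, g)`, since these take values in its support. -/
lemma obsH_sq_le {α : ℝ} (hα : 0 < α) {ℓ₀ r : ℕ} (h0 : 0 < ℓ₀) (q : SimpleGraph (Fin r) → ℝ)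
    (ℓ : Fin r → ℕ) (hℓ : ∀ i, ℓ₀ ≤ ℓ i) :
    ∃ C : ℝ, 0 ≤ C ∧ ∀ (n : ℕ) (G : SimpleGraph (Fin n)), Good G →
      obsH α q ℓ G ^ 2 ≤ C * obsK α ℓ₀ (2 * ∑ i, ℓ i) (2 * ∑ i, ℓ i) G := by
  set L := ∑ i, ℓ i with hL
  set Q := ∑ K, |q K| with hQ
  have hQ0 : 0 ≤ Q := Finset.sum_nonneg fun _ _ => abs_nonneg _
  refine ⟨Q ^ 2 * ((2 * L) ^ r * (2 * L) ^ r : ℕ), by positivity, fun n G hG => ?_⟩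
  have hqQ : ∀ K, |q K| ≤ Q := fun K =>
    Finset.single_le_sum (f := fun K => |q K|) (fun _ _ => abs_nonneg _) (Finset.mem_univ K)
  have h1 : |obsH α q ℓ G| ≤ Q * ∑ f : Fin r → Fin n, mono α G (expo f ℓ) := by
    rw [Finset.mul_sum]
    refine (Finset.abs_sum_le_sum_abs _ _).trans (Finset.sum_le_sum fun f _ => ?_)
    have hm := mono_pos hα hG (expo f ℓ)
    split_ifs
    · rw [abs_mul, abs_of_pos hm]
      exact mul_le_mul_of_nonneg_right (hqQ _) hm.le
    · rw [abs_zero]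
      positivity
  have hS : 0 ≤ ∑ f : Fin r → Fin n, mono α G (expo f ℓ) :=
    Finset.sum_nonneg fun f _ => (mono_pos hα hG _).le
  let M : (Fin r → Fin n) × (Fin r → Fin n) → Fin n → Fin (2 * L + 1) := fun p v =>
    ⟨expo p.1 ℓ v + expo p.2 ℓ v, by
      have := expo_le_sum p.1 ℓ v
      have := expo_le_sum p.2 ℓ v
      omega⟩
  have h2 : (∑ f : Fin r → Fin n, mono α G (expo f ℓ)) ^ 2 ≤
      ∑ p, mono α G fun v => (M p v : ℕ) := by
    rw [sq, Finset.sum_mul_sum, Fintype.sum_prod_type]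
    exact Finset.sum_le_sum fun f _ => Finset.sum_le_sum fun g _ => mono_mul_le hα hG _ _
  have h3 : ∑ p, mono α G (fun v => (M p v : ℕ)) ≤
      ((2 * L) ^ r * (2 * L) ^ r : ℕ) * obsK α ℓ₀ (2 * L) (2 * L) G := by
    rw [← Finset.sum_fiberwise' Finset.univ M fun m => mono α G fun v => (m v : ℕ)]
    refine le_trans ?_ (Finset.mul_sum _ _ _).symm.le
    refine Finset.sum_le_sum fun m _ => ?_
    rw [Finset.sum_const, nsmul_eq_mul]
    by_cases hne : ∃ p, M p = m
    · obtain ⟨p, rfl⟩ := hne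
      rw [if_pos]
      · refine mul_le_mul_of_nonneg_right ?_ (mono_pos hα hG _).le
        have hsum : ∑ v, (M p v : ℕ) = 2 * L := by
          simp only [M, Finset.sum_add_distrib, sum_expo]
          omega
        set s := Finset.univ.filter fun v => (M p v : ℕ) ≠ 0 with hs
        have hcard : s.card ≤ 2 * L := by
          rw [← hsum, Finset.card_eq_sum_ones, hs, Finset.sum_filter]
          refine Finset.sum_le_sum fun v _ => ?_
          split_ifs <;> omega
        have hsub : (Finset.univ.filter fun p' => M p' = M p) ⊆
            (Fintype.piFinset fun _ => s) ×ˢ (Fintype.piFinset fun _ => s) := by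
          intro p' hp'
          have hp' : M p' = M p := (Finset.mem_filter.1 hp').2
          simp only [Finset.mem_product, Fintype.mem_piFinset, hs, Finset.mem_filter,
            Finset.mem_univ, true_and, ← hp']
          refine ⟨fun i => ?_, fun i => ?_⟩
          · have := expo_ne_zero h0 p'.1 hℓ i
            simp only [M]
            omega
          · have := expo_ne_zero h0 p'.2 hℓ i
            simp only [M]
            omega
        have := Finset.card_le_card hsub
        rw [Finset.card_product, Fintype.card_piFinset] at this
        simp only [Finset.prod_const, Finset.card_univ, Fintype.card_fin] at this
        exact_mod_cast this.trans
          (Nat.mul_le_mul (Nat.pow_le_pow_left hcard r) (Nat.pow_le_pow_left hcard r))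
      · constructor
        · intro v
          simp only [M]
          rcases expo_eq_zero_or p.1 hℓ v with h | h <;>
            rcases expo_eq_zero_or p.2 hℓ v with h' | h' <;> omega
        · simp only [M, Finset.sum_add_distrib, sum_expo]
          omega
    · have : (Finset.univ.filter fun p => M p = m) = ∅ :=
        Finset.filter_eq_empty_iff.2 fun p _ hp => hne ⟨p, hp⟩
      rw [this]
      have := (mono_pos hα hG fun v => (m v : ℕ)).le
      simp only [Finset.card_empty, Nat.cast_zero, zero_mul]
      split_ifs <;> positivity
  calc obsH α q ℓ G ^ 2 = |obsH α q ℓ G| ^ 2 := (sq_abs _).symm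
    _ ≤ (Q * ∑ f : Fin r → Fin n, mono α G (expo f ℓ)) ^ 2 := by gcongr
    _ = Q ^ 2 * (∑ f : Fin r → Fin n, mono α G (expo f ℓ)) ^ 2 := by ring
    _ ≤ Q ^ 2 * (((2 * L) ^ r * (2 * L) ^ r : ℕ) * obsK α ℓ₀ (2 * L) (2 * L) G) := by
        gcongr
        exact h2.trans h3
    _ = _ := by ring

lemma growth_two_mul_le {α : ℝ} (hα : 0 < α) {n₀ : ℕ} (h3 : 3 ≤ n₀) {x : ℝ} (hx : 0 ≤ x)
    (n : ℕ) : growth α n₀ (2 * x) n ≤ growth α n₀ x n ^ 2 := by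
  unfold growth
  rw [← Finset.prod_pow]
  refine Finset.prod_le_prod (fun j hj => ?_) fun j hj => ?_ <;>
    have := totW_pos hα (h3.trans (Finset.mem_Ico.1 hj).1)
  · positivity
  · have : 2 * x / totW α j = 2 * (x / totW α j) := by ring
    rw [this]
    nlinarith [sq_nonneg (x / totW α j)]

/-- After normalization by the growth factor, observables with exponents `> 1 + α` are bounded in
`L²`. -/
lemma SChain.expect_sq_le {α : ℝ} (hα : 0 < α) {n₀ : ℕ} (h3 : 3 ≤ n₀) {c : ℝ}
    {μ : (n : ℕ) → SimpleGraph (Fin n) → ℝ} (h : SChain α n₀ c μ)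
    (hpos : ∀ n, n₀ ≤ n → ∀ G, 0 ≤ μ n G) {ℓ₀ : ℕ} (hℓ₀ : 1 + α < ℓ₀) {r : ℕ}
    (q : SimpleGraph (Fin r) → ℝ) (ℓ : Fin r → ℕ) (hℓ : ∀ i, ℓ₀ ≤ ℓ i) :
    ∃ C, 0 ≤ C ∧ ∀ n, n₀ ≤ n →
      expect (μ n) (fun G => obsH α q ℓ G ^ 2) ≤ C * growth α n₀ (∑ i, (ℓ i : ℝ)) n ^ 2 := by
  have h0 : 0 < ℓ₀ := by
    have : (0 : ℝ) < ℓ₀ := by linarith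
    exact_mod_cast this
  obtain ⟨C₁, hC₁, h1⟩ := obsH_sq_le hα h0 q ℓ hℓ
  obtain ⟨C₂, h2⟩ := h.expect_obsK_le hα h3 hℓ₀ (2 * ∑ i, ℓ i) (2 * ∑ i, ℓ i)
  refine ⟨C₁ * |C₂|, by positivity, fun n hn => ?_⟩
  have hcast : ((2 * ∑ i, ℓ i : ℕ) : ℝ) = 2 * ∑ i, (ℓ i : ℝ) := by push_cast; rfl
  have hg := growth_pos hα h3 (x := 2 * ∑ i, (ℓ i : ℝ)) (by positivity) n
  calc _ ≤ expect (μ n) (fun G => C₁ * obsK α ℓ₀ (2 * ∑ i, ℓ i) (2 * ∑ i, ℓ i) G) :=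
        h.expect_le hn (hpos n hn) (h1 n)
    _ = C₁ * expect (μ n) (obsK α ℓ₀ (2 * ∑ i, ℓ i) (2 * ∑ i, ℓ i)) := expect_const_mul _ _ _
    _ ≤ C₁ * (C₂ * growth α n₀ (2 * ∑ i, (ℓ i : ℝ)) n) := by
        rw [← hcast]
        exact mul_le_mul_of_nonneg_left (h2 n hn) hC₁
    _ ≤ C₁ * (|C₂| * growth α n₀ (2 * ∑ i, (ℓ i : ℝ)) n) := by
        gcongr
        exact le_abs_self _
    _ ≤ C₁ * (|C₂| * growth α n₀ (∑ i, (ℓ i : ℝ)) n ^ 2) := by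
        gcongr
        exact growth_two_mul_le hα h3 (by positivity) n
    _ = _ := by ring

/-! ### Invariance under isomorphism -/

/-- A function of a graph which only depends on its isomorphism class. -/
def IsoInv {n : ℕ} (f : SimpleGraph (Fin n) → ℝ) : Prop :=
  ∀ G G' : SimpleGraph (Fin n), Nonempty (G ≃g G') → f G = f G'

lemma degR_iso {n : ℕ} {G G' : SimpleGraph (Fin n)} (e : G ≃g G') (v : Fin n) :
    degR G' (e v) = degR G v :=
  (Nat.card_congr (e.toEquiv.subtypeEquiv fun w => (e.map_adj_iff (v := v) (w := w)).symm)).symm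

lemma vtxW_iso (α : ℝ) {n : ℕ} {G G' : SimpleGraph (Fin n)} (e : G ≃g G') (v : Fin n) :
    vtxW α G' (e v) = vtxW α G v := by
  simp only [vtxW, degR_iso e]

lemma Good.iso {n : ℕ} {G G' : SimpleGraph (Fin n)} (e : G ≃g G') (hG : Good G) : Good G' := by
  refine ⟨fun v => ?_, ?_⟩
  · have := hG.1 (e.symm v)
    rwa [← degR_iso e, e.apply_symm_apply] at this
  · rw [← hG.2, ← e.toEquiv.sum_comp]
    exact congrArg (· + 2) (Finset.sum_congr rfl fun v _ => degR_iso e v)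

lemma obsH_isoInv (α : ℝ) {r n : ℕ} (q : SimpleGraph (Fin r) → ℝ) (ℓ : Fin r → ℕ) :
    IsoInv (n := n) (obsH α q ℓ) := by
  rintro G G' ⟨e⟩
  unfold obsH
  refine Fintype.sum_equiv (Equiv.arrowCongr (Equiv.refl (Fin r)) e.toEquiv) _ _ fun f => ?_
  have hinj : Function.Injective (fun i => e (f i)) ↔ Function.Injective f :=
    e.injective.of_comp_iff f
  have hcomap : G'.comap (fun i => e (f i)) = G.comap f := by
    ext a b
    exact e.map_adj_iff
  have hexpo : ∀ v, expo (fun i => e (f i)) ℓ (e v) = expo f ℓ v := fun v => by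
    simp only [expo, e.injective.eq_iff]
  have hmono : mono α G' (expo (fun i => e (f i)) ℓ) = mono α G (expo f ℓ) := by
    unfold mono
    rw [← e.toEquiv.prod_comp]
    refine Finset.prod_congr rfl fun v _ => ?_
    change ris (vtxW α G' (e v)) (expo (fun i => e (f i)) ℓ (e v)) = _
    rw [vtxW_iso, hexpo]
  change _ = if Function.Injective (fun i => e (f i)) then
    q (G'.comap (fun i => e (f i))) * mono α G' (expo (fun i => e (f i)) ℓ) else 0
  simp only [hinj, hcomap, hmono]

/-- An isomorphism extends to the graphs obtained by attaching a vertex at corresponding places. -/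
lemma extendTree_iso {n : ℕ} {G G' : SimpleGraph (Fin n)} (e : G ≃g G') (u : Fin n) :
    Nonempty (extendTree G u ≃g extendTree G' (e u)) := by
  let E : Fin (n + 1) ≃ Fin (n + 1) :=
    (finSuccEquivLast.trans e.toEquiv.optionCongr).trans finSuccEquivLast.symm
  have h1 : ∀ a : Fin n, E a.castSucc = (e a).castSucc := fun a => by simp [E]
  have h2 : E (Fin.last n) = Fin.last n := by simp [E]
  refine ⟨⟨E, fun {a b} => ?_⟩⟩
  refine Fin.lastCases ?_ (fun a => ?_) a <;> refine Fin.lastCases ?_ (fun b => ?_) b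
  · simp
  · rw [h1, h2, SimpleGraph.adj_comm, extendTree_adj_last, SimpleGraph.adj_comm,
      extendTree_adj_last, e.injective.eq_iff]
  · rw [h1, h2, extendTree_adj_last, extendTree_adj_last, e.injective.eq_iff]
  · rw [h1, h1, extendTree_adj_castSucc, extendTree_adj_castSucc, e.map_adj_iff]

lemma IsoInv.stepOp (α : ℝ) {n : ℕ} {f : SimpleGraph (Fin (n + 1)) → ℝ} (hf : IsoInv f) :
    IsoInv (stepOp α f) := by
  rintro G G' ⟨e⟩
  unfold AffinePA.stepOp
  refine Fintype.sum_equiv e.toEquiv _ _ fun u => ?_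
  change _ = vtxW α G' (e u) / totW α n * f (extendTree G' (e u))
  rw [vtxW_iso, hf _ _ (extendTree_iso e u)]

/-! ### Total variation between isomorphism classes -/

instance (n : ℕ) : Finite (IsoClass n) := inferInstanceAs (Finite (Quotient (isoSetoid n)))

/-- The isomorphism class of a graph. -/
def cls {n : ℕ} (G : SimpleGraph (Fin n)) : IsoClass n := Quotient.mk (isoSetoid n) G

/-- The indicator of a set of isomorphism classes, as a function of the graph. -/
def ind {n : ℕ} (s : Set (IsoClass n)) (G : SimpleGraph (Fin n)) : ℝ :=
  if cls G ∈ s then 1 else 0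

lemma ind_isoInv {n : ℕ} (s : Set (IsoClass n)) : IsoInv (ind s) := by
  rintro G G' h
  have : cls G = cls G' := Quotient.sound h
  simp only [ind, this]

/-- The largest mass of a set of isomorphism classes, in absolute value. -/
def tv {n : ℕ} (d : SimpleGraph (Fin n) → ℝ) : ℝ := ⨆ s : Set (IsoClass n), |expect d (ind s)|

lemma abs_expect_ind_le {n : ℕ} (d : SimpleGraph (Fin n) → ℝ) (s : Set (IsoClass n)) :
    |expect d (ind s)| ≤ tv d :=
  le_ciSup (f := fun s : Set (IsoClass n) => |expect d (ind s)|)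
    (Set.finite_range _).bddAbove s

lemma tv_nonneg {n : ℕ} (d : SimpleGraph (Fin n) → ℝ) : 0 ≤ tv d :=
  (abs_nonneg _).trans (abs_expect_ind_le d ∅)

/-- The supremum over events bounds the expectation of every isomorphism invariant function with
values in `[0, 1]`: the expectation is largest on the event where the class mass is positive. -/
lemma expect_le_tv {n : ℕ} (d : SimpleGraph (Fin n) → ℝ) {f : SimpleGraph (Fin n) → ℝ}
    (hf : IsoInv f) (h0 : ∀ G, 0 ≤ f G) (h1 : ∀ G, f G ≤ 1) : expect d f ≤ tv d := by
  have := Fintype.ofFinite (IsoClass n)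
  let F : IsoClass n → ℝ := Quotient.lift f fun G G' h => hf G G' h
  have hF : ∀ G, f G = F (cls G) := fun G => rfl
  -- only the masses of the isomorphism classes matter
  have key : ∀ Φ : IsoClass n → ℝ, expect d (fun G => Φ (cls G)) =
      ∑ c, (∑ G with cls G = c, d G) * Φ c := by
    intro Φ
    unfold expect
    rw [← Finset.sum_fiberwise Finset.univ cls]
    refine Finset.sum_congr rfl fun c _ => ?_
    rw [Finset.sum_mul]
    exact Finset.sum_congr rfl fun G hG => congrArg (fun x => d G * Φ x) (Finset.mem_filter.1 hG).2
  have h2 := key F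
  have h3 := key fun c => if c ∈ {c | 0 < ∑ G with cls G = c, d G} then 1 else 0
  refine le_trans ?_ ((le_abs_self _).trans
    (abs_expect_ind_le d {c | 0 < ∑ G with cls G = c, d G}))
  refine h2.le.trans (le_trans ?_ h3.ge)
  refine Finset.sum_le_sum fun c _ => ?_
  obtain ⟨G, rfl⟩ := Quotient.exists_rep c
  have hF0 : 0 ≤ F (cls G) := h0 G
  have hF1 : F (cls G) ≤ 1 := h1 G
  change (∑ G' with cls G' = cls G, d G') * F (cls G) ≤
    (∑ G' with cls G' = cls G, d G') * if 0 < ∑ G' with cls G' = cls G, d G' then 1 else 0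
  split_ifs with h
  · exact mul_le_mul_of_nonneg_left hF1 h.le
  · rw [mul_zero]
    exact mul_nonpos_of_nonpos_of_nonneg (not_lt.1 h) hF0

lemma expect_const {n : ℕ} {d : SimpleGraph (Fin n) → ℝ} (hd : ∑ G, d G = 0) (a : ℝ) :
    expect d (fun _ => a) = 0 := by
  unfold expect
  rw [← Finset.sum_mul, hd, zero_mul]

lemma abs_expect_le_tv {n : ℕ} {d : SimpleGraph (Fin n) → ℝ} (hd : ∑ G, d G = 0)
    {f : SimpleGraph (Fin n) → ℝ}
    (hf : IsoInv f) (h0 : ∀ G, 0 ≤ f G) (h1 : ∀ G, f G ≤ 1) : |expect d f| ≤ tv d := by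
  refine abs_le'.2 ⟨expect_le_tv d hf h0 h1, ?_⟩
  have h2 := expect_le_tv d (f := fun G => 1 + -1 * f G)
    (fun G G' h => congrArg (fun x => 1 + -1 * x) (hf G G' h)) (fun G => by linarith [h1 G]) (fun G => by linarith [h0 G])
  rw [expect_add, expect_const hd, expect_const_mul] at h2
  linarith

/-- Splitting an observable at height `θ`: the bounded part is controlled by the total variation,
the remainder by the second moments. -/
lemma abs_expect_le_of_sq {n : ℕ} {μ ν : SimpleGraph (Fin n) → ℝ} (hμ : ∀ G, 0 ≤ μ G)
    (hν : ∀ G, 0 ≤ ν G) (hd : ∑ G, (μ G - ν G) = 0) {f : SimpleGraph (Fin n) → ℝ} (hf : IsoInv f)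
    {θ : ℝ} (hθ : 0 < θ) :
    |expect (fun G => μ G - ν G) f| ≤ 2 * θ * tv (fun G => μ G - ν G) +
      (expect μ (fun G => f G ^ 2) + expect ν (fun G => f G ^ 2)) / (4 * θ) := by
  let g : SimpleGraph (Fin n) → ℝ := fun G => (max (-θ) (min θ (f G)) + θ) / (2 * θ)
  have hg0 : ∀ G, 0 ≤ g G := fun G =>
    div_nonneg (by linarith [le_max_left (-θ) (min θ (f G))]) (by positivity)
  have hg1 : ∀ G, g G ≤ 1 := fun G => by
    have : max (-θ) (min θ (f G)) ≤ θ := max_le (by linarith) (min_le_left _ _)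
    rw [div_le_one (by positivity)]
    linarith
  have hgi : IsoInv g := fun G G' h => by simp only [g, hf G G' h]
  have h1 := abs_expect_le_tv hd hgi hg0 hg1
  have hrest : ∀ G, |f G - (2 * θ * g G - θ)| ≤ f G ^ 2 / (4 * θ) := by
    intro G
    have : 2 * θ * g G - θ = max (-θ) (min θ (f G)) := by
      simp only [g]
      field_simp
      ring
    rw [this, le_div_iff₀ (by positivity)]
    rcases le_total θ (f G) with h | h
    · rw [min_eq_left h, max_eq_right (by linarith), abs_of_nonneg (by linarith)]
      nlinarith [sq_nonneg (f G - 2 * θ)]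
    · rw [min_eq_right h]
      rcases le_total (-θ) (f G) with h' | h'
      · rw [max_eq_right h', sub_self, abs_zero, zero_mul]
        positivity
      · rw [max_eq_left h', abs_of_nonpos (by linarith)]
        nlinarith [sq_nonneg (f G + 2 * θ)]
  have hsplit : expect (fun G => μ G - ν G) f =
      2 * θ * expect (fun G => μ G - ν G) g +
        expect (fun G => μ G - ν G) (fun G => f G - (2 * θ * g G - θ)) := by
    have : f = fun G => (2 * θ * g G + -θ) + (f G - (2 * θ * g G - θ)) := by
      funext G; ring
    conv_lhs => rw [this]
    rw [expect_add, expect_add, expect_const hd, expect_const_mul, add_zero]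
  have hbound : ∀ m : SimpleGraph (Fin n) → ℝ, (∀ G, 0 ≤ m G) →
      |expect m (fun G => f G - (2 * θ * g G - θ))| ≤ expect m (fun G => f G ^ 2) / (4 * θ) := by
    intro m hm
    unfold expect
    rw [Finset.sum_div]
    refine (Finset.abs_sum_le_sum_abs _ _).trans (Finset.sum_le_sum fun G _ => ?_)
    rw [abs_mul, abs_of_nonneg (hm G), mul_div_assoc]
    exact mul_le_mul_of_nonneg_left (hrest G) (hm G)
  rw [hsplit, expect_sub_left μ ν (fun G => f G - (2 * θ * g G - θ)), add_div]
  refine (abs_add_le _ _).trans (add_le_add ?_ ((abs_sub _ _).trans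
    (add_le_add (hbound μ hμ) (hbound ν hν))))
  rw [abs_mul, abs_of_pos (by positivity)]
  exact mul_le_mul_of_nonneg_left h1 (by positivity)

lemma stepOp_nonneg {α : ℝ} (hα : 0 < α) {n : ℕ} (hn : 3 ≤ n) {f : SimpleGraph (Fin (n + 1)) → ℝ}
    (h0 : ∀ G, 0 ≤ f G) {G : SimpleGraph (Fin n)} (hG : Good G) : 0 ≤ stepOp α f G :=
  Finset.sum_nonneg fun u _ =>
    mul_nonneg (div_nonneg (hG.vtxW_pos hα u).le (totW_pos hα hn).le) (h0 _)

lemma stepOp_le_one {α : ℝ} (hα : 0 < α) {n : ℕ} (hn : 3 ≤ n) {f : SimpleGraph (Fin (n + 1)) → ℝ}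
    (h1 : ∀ G, f G ≤ 1) {G : SimpleGraph (Fin n)} (hG : Good G) : stepOp α f G ≤ 1 := by
  have hZ := totW_pos hα hn
  calc stepOp α f G ≤ ∑ u, vtxW α G u / totW α n * 1 :=
        Finset.sum_le_sum fun u _ =>
          mul_le_mul_of_nonneg_left (h1 _) (div_nonneg (hG.vtxW_pos hα u).le hZ.le)
    _ = 1 := by
        simp only [mul_one]
        rw [← Finset.sum_div, hG.sum_vtxW, div_self (ne_of_gt hZ)]

/-- The transition operator contracts the total variation. -/
lemma SChain.tv_succ_le {α : ℝ} (hα : 0 < α) {n₀ : ℕ} (h3 : 3 ≤ n₀)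
    {δ : (n : ℕ) → SimpleGraph (Fin n) → ℝ} (h : SChain α n₀ 0 δ) {n : ℕ} (hn : n₀ ≤ n) :
    tv (δ (n + 1)) ≤ tv (δ n) := by
  refine ciSup_le fun s => ?_
  have hi0 : ∀ G, 0 ≤ ind s G := fun G => by unfold ind; split_ifs <;> norm_num
  have hi1 : ∀ G, ind s G ≤ 1 := fun G => by unfold ind; split_ifs <;> norm_num
  rw [h.step n hn, h.expect_congr hn (g := fun G => if Good G then stepOp α (ind s) G else 0)
    fun G hG => (if_pos hG).symm]
  refine abs_expect_le_tv (h.mass n hn) (fun G G' hGG' => ?_) (fun G => ?_) fun G => ?_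
  · have : Good G ↔ Good G' := by
      obtain ⟨e⟩ := hGG'
      exact ⟨fun h => h.iso e, fun h => h.iso e.symm⟩
    simp only [this, (ind_isoInv s).stepOp α G G' hGG']
  · split_ifs with hG
    · exact stepOp_nonneg hα (h3.trans hn) hi0 hG
    · rfl
  · split_ifs with hG
    · exact stepOp_le_one hα (h3.trans hn) hi1 hG
    · exact zero_le_one

/-! ### The law of the chain as a family of weights -/

instance (V : Type*) : MeasurableSingletonClass (SimpleGraph V) := ⟨fun _ => trivial⟩

lemma measurableSet_graph {V : Type*} (A : Set (SimpleGraph V)) : MeasurableSet A := trivial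

lemma measurableSet_isoClass {n : ℕ} (A : Set (IsoClass n)) : MeasurableSet A := trivial

/-- The probability that the tree with `m` added vertices is equal to a given graph. -/
def paW (α : ℝ) {k : ℕ} (S : SimpleGraph (Fin k)) : (m : ℕ) → SimpleGraph (Fin (k + m)) → ℝ
  | 0 => fun G => if G = S then 1 else 0
  | m + 1 => fun G => expect (paW α S m) (stepOp α fun T => if T = G then 1 else 0)

lemma stepOp_eq_sum (α : ℝ) {n : ℕ} (f : SimpleGraph (Fin (n + 1)) → ℝ) (G : SimpleGraph (Fin n)) :
    stepOp α f G = ∑ T, stepOp α (fun T' => if T' = T then 1 else 0) G * f T := by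
  simp only [stepOp, Finset.sum_mul]
  rw [Finset.sum_comm]
  refine Finset.sum_congr rfl fun u _ => ?_
  simp

lemma expect_paW_succ (α : ℝ) {k : ℕ} (S : SimpleGraph (Fin k)) (m : ℕ)
    (f : SimpleGraph (Fin (k + (m + 1))) → ℝ) :
    expect (paW α S (m + 1)) f = expect (paW α S m) (stepOp α (n := k + m) f) := by
  have h : stepOp α (n := k + m) f = fun G =>
      ∑ T, stepOp α (n := k + m) (fun T' => if T' = T then 1 else 0) G * f T :=
    funext fun G => stepOp_eq_sum α f G
  rw [h, expect_sum]
  refine Finset.sum_congr rfl fun T _ => ?_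
  rw [mul_comm, paW, ← expect_const_mul]
  simp only [mul_comm]

lemma paW_spec {α : ℝ} (hα : 0 < α) {k : ℕ} (hk : 3 ≤ k) {S : SimpleGraph (Fin k)}
    (hS : Good S) (m : ℕ) :
    (∀ G, 0 ≤ paW α S m G) ∧ (∀ G, paW α S m G ≠ 0 → Good G) ∧ ∑ G, paW α S m G = 1 := by
  induction m with
  | zero =>
    refine ⟨fun G => ?_, fun G hG => ?_, ?_⟩
    · simp only [paW]
      split_ifs <;> norm_num
    · simp only [paW] at hG
      have : G = S := by_contra fun h => hG (if_neg h)
      rwa [this]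
    · simp [paW]
  | succ m ih =>
    obtain ⟨h0, h1, h2⟩ := ih
    have hkm : 3 ≤ k + m := by omega
    refine ⟨fun G => ?_, fun G hG => ?_, ?_⟩
    · refine Finset.sum_nonneg fun T _ => ?_
      by_cases hT : paW α S m T = 0
      · rw [hT, zero_mul]
      · refine mul_nonneg (h0 T) (stepOp_nonneg hα hkm (fun G => ?_) (h1 T hT))
        split_ifs <;> norm_num
    · obtain ⟨T, -, hT⟩ := Finset.exists_ne_zero_of_sum_ne_zero hG
      obtain ⟨u, -, hu⟩ := Finset.exists_ne_zero_of_sum_ne_zero (right_ne_zero_of_mul hT)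
      have : extendTree T u = G := by
        by_contra h
        exact hu (mul_eq_zero_of_right _ (if_neg h))
      rw [← this]
      exact (h1 T (left_ne_zero_of_mul hT)).extend u
    · have h3 : expect (paW α S (m + 1)) (fun _ => 1) = expect (paW α S m) (fun _ => 1) := by
        rw [expect_paW_succ]
        refine Finset.sum_congr rfl fun G _ => ?_
        by_cases hG : paW α S m G = 0
        · simp [hG]
        · have hZ := totW_pos hα hkm
          congr 1
          simp only [stepOp, mul_one]
          rw [← Finset.sum_div, (h1 G hG).sum_vtxW, div_self (ne_of_gt hZ)]
      simpa [expect, h2] using h3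

lemma stepMeasure_apply {α : ℝ} (hα : 0 < α) {n : ℕ} (hn : 3 ≤ n) {G : SimpleGraph (Fin n)}
    (hG : Good G) (A : Set (SimpleGraph (Fin (n + 1)))) :
    stepMeasure α G A = ENNReal.ofReal (stepOp α (fun T => if T ∈ A then 1 else 0) G) := by
  have hZ := totW_pos hα hn
  unfold stepOp
  rw [ENNReal.ofReal_sum_of_nonneg]
  · unfold stepMeasure
    rw [Measure.finsetSum_apply]
    refine Finset.sum_congr rfl fun u _ => ?_
    rw [Measure.smul_apply, Measure.dirac_apply' _ (measurableSet_graph _), smul_eq_mul,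
      ENNReal.ofReal_mul (div_nonneg (hG.vtxW_pos hα u).le hZ.le)]
    congr 1
    by_cases h : extendTree G u ∈ A <;> simp [h]
  · intro u _
    refine mul_nonneg (div_nonneg (hG.vtxW_pos hα u).le hZ.le) ?_
    beta_reduce
    split_ifs <;> norm_num

lemma paLaw_apply {α : ℝ} (hα : 0 < α) {k : ℕ} (hk : 3 ≤ k) {S : SimpleGraph (Fin k)}
    (hS : Good S) (m : ℕ) (A : Set (SimpleGraph (Fin (k + m)))) :
    paLaw α S m A = ENNReal.ofReal (expect (paW α S m) fun T => if T ∈ A then 1 else 0) := by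
  induction m with
  | zero =>
    rw [paLaw, Measure.dirac_apply' _ (measurableSet_graph _)]
    have : expect (paW α S 0) (fun T => if T ∈ A then 1 else 0) = if S ∈ A then 1 else 0 := by
      simp only [expect, paW, ite_mul, one_mul, zero_mul]
      exact Fintype.sum_ite_eq' S fun T => if T ∈ A then (1 : ℝ) else 0
    rw [this]
    by_cases h : S ∈ A <;> simp [h]
  | succ m ih =>
    obtain ⟨h0, h1, -⟩ := paW_spec hα hk hS m
    have hkm : 3 ≤ k + m := by omega
    rw [paLaw, Measure.bind_apply (measurableSet_graph _) measurable_from_top.aemeasurable, lintegral_fintype,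
      expect_paW_succ]
    unfold expect
    have hA : ∀ T, 0 ≤ paW α S m T * stepOp α (n := k + m) (fun T => if T ∈ A then 1 else 0) T := by
      intro T
      by_cases hT : paW α S m T = 0
      · rw [hT, zero_mul]
      · refine mul_nonneg (h0 T) (stepOp_nonneg hα hkm (fun G => ?_) (h1 T hT))
        split_ifs <;> norm_num
    refine Eq.trans ?_ (ENNReal.ofReal_sum_of_nonneg fun T _ => hA T).symm
    refine Finset.sum_congr rfl fun T _ => ?_
    have hs : paLaw α S m {T} = ENNReal.ofReal (paW α S m T) := by
      rw [ih]
      simp [expect]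
    rw [hs, ENNReal.ofReal_mul (h0 T), mul_comm]
    by_cases hT : paW α S m T = 0
    · simp [hT]
    · rw [stepMeasure_apply hα hkm (h1 T hT)]

/-- The weights `paW`, indexed by the total number of vertices. -/
def lawW (α : ℝ) {k : ℕ} (S : SimpleGraph (Fin k)) (n : ℕ) (G : SimpleGraph (Fin n)) : ℝ :=
  if h : k ≤ n then paW α S (n - k) (G.comap (finCongr (Nat.add_sub_cancel' h))) else 0

lemma lawW_add (α : ℝ) {k : ℕ} (S : SimpleGraph (Fin k)) (m : ℕ) :
    lawW α S (k + m) = paW α S m := by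
  have key : ∀ (m' : ℕ) (h : k + m' = k + m) (G : SimpleGraph (Fin (k + m))),
      paW α S m' (G.comap (finCongr h)) = paW α S m G := by
    intro m' h G
    obtain rfl : m' = m := by omega
    rfl
  funext G
  rw [lawW, dif_pos (Nat.le_add_right k m)]
  exact key _ _ G

lemma isoClassLaw_add (α : ℝ) {k : ℕ} (S : SimpleGraph (Fin k)) (m : ℕ) :
    isoClassLaw α S (k + m) = (paLaw α S m).map cls := by
  have key : ∀ (m' : ℕ) (h : k + m' = k + m),
      (paLaw α S m').map (fun G => cls (G.map (finCongr h).toEmbedding)) =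
        (paLaw α S m).map cls := by
    intro m' h
    obtain rfl : m' = m := by omega
    congr 1
    funext G
    congr 1
    exact SimpleGraph.map_id G
  rw [isoClassLaw, dif_pos (Nat.le_add_right k m)]
  exact key _ _

lemma lawW_nonneg {α : ℝ} (hα : 0 < α) {k : ℕ} (hk : 3 ≤ k) {S : SimpleGraph (Fin k)}
    (hS : Good S) (n : ℕ) (G : SimpleGraph (Fin n)) : 0 ≤ lawW α S n G := by
  unfold lawW
  split_ifs with h
  · exact (paW_spec hα hk hS _).1 _
  · rfl

lemma lawW_chain {α : ℝ} (hα : 0 < α) {k : ℕ} (hk : 3 ≤ k) {S : SimpleGraph (Fin k)}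
    (hS : Good S) : SChain α k 1 (lawW α S) := by
  refine ⟨fun n hn => ?_, fun n hn => ?_, fun n hn f => ?_⟩ <;>
    obtain ⟨m, rfl⟩ := Nat.exists_eq_add_of_le hn
  · rw [lawW_add]
    exact (paW_spec hα hk hS m).2.1
  · rw [lawW_add]
    exact (paW_spec hα hk hS m).2.2
  · rw [lawW_add]
    have := lawW_add α S (m + 1)
    exact (congrArg (expect · f) this).trans (expect_paW_succ α S m f)

lemma isoClassLaw_apply {α : ℝ} (hα : 0 < α) {k : ℕ} (hk : 3 ≤ k) {S : SimpleGraph (Fin k)}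
    (hS : Good S) {n : ℕ} (hn : k ≤ n) (s : Set (IsoClass n)) :
    (isoClassLaw α S n s).toReal = expect (lawW α S n) (ind s) := by
  obtain ⟨m, rfl⟩ := Nat.exists_eq_add_of_le hn
  rw [isoClassLaw_add, lawW_add, Measure.map_apply measurable_from_top (measurableSet_isoClass _),
    paLaw_apply hα hk hS, ENNReal.toReal_ofReal]
  · rfl
  · refine Finset.sum_nonneg fun G _ => mul_nonneg ((paW_spec hα hk hS m).1 G) ?_
    beta_reduce
    split_ifs <;> norm_num

/-- All sets of isomorphism classes are measurable, so `tvDist` is the finite supremum `tv`. -/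
lemma tvDist_isoClassLaw {α : ℝ} (hα : 0 < α) {k k' : ℕ} (hk : 3 ≤ k) (hk' : 3 ≤ k')
    {S : SimpleGraph (Fin k)} (hS : Good S) {S' : SimpleGraph (Fin k')} (hS' : Good S') {n : ℕ}
    (hn : k ≤ n) (hn' : k' ≤ n) :
    tvDist (isoClassLaw α S n) (isoClassLaw α S' n) =
      tv (fun G => lawW α S n G - lawW α S' n G) := by
  refine (Equiv.subtypeUnivEquiv fun _ => trivial).iSup_congr fun s => ?_
  rw [isoClassLaw_apply hα hk hS hn, isoClassLaw_apply hα hk' hS' hn', expect_sub_left]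
  rfl

/-! ### Seeds stay distinguishable -/

/-- If some observable with exponents `> 1 + α` separates two chains at time `n₀`, then their
total variation distance is bounded below. -/
lemma tv_lower_bound {α : ℝ} (hα : 0 < α) {n₀ : ℕ} (h3 : 3 ≤ n₀)
    {μ ν : (n : ℕ) → SimpleGraph (Fin n) → ℝ} (hμ : SChain α n₀ 1 μ) (hν : SChain α n₀ 1 ν)
    (hμ0 : ∀ n G, 0 ≤ μ n G) (hν0 : ∀ n G, 0 ≤ ν n G) {ℓ₀ : ℕ} (hℓ₀ : 1 + α < ℓ₀)
    (hsep : ∃ (r : ℕ) (q : SimpleGraph (Fin r) → ℝ) (ℓ : Fin r → ℕ), (∀ i, ℓ₀ ≤ ℓ i) ∧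
      expect (fun G => μ n₀ G - ν n₀ G) (obsH α q ℓ) ≠ 0) :
    ∃ ε, 0 < ε ∧ ∀ n, n₀ ≤ n → ε ≤ tv (fun G => μ n G - ν n G) := by
  have hδ : SChain α n₀ 0 (fun n G => μ n G - ν n G) := by
    simpa using hμ.sub hν
  -- a separating observable of the smallest possible order
  obtain ⟨q, ℓ, hℓ, hc⟩ := Nat.find_spec hsep
  have hmin := fun r' (hr' : r' < Nat.find hsep) => Nat.find_min hsep hr'
  generalize Nat.find hsep = r at q ℓ hℓ hc hmin
  cases r with
  | zero => exact absurd (hδ.expect_obsH_zero le_rfl q ℓ) hc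
  | succ r =>
  have hr : ∀ r' < r + 1, ∀ (q : SimpleGraph (Fin r') → ℝ) (ℓ : Fin r' → ℕ), (∀ i, ℓ₀ ≤ ℓ i) →
      expect (fun G => μ n₀ G - ν n₀ G) (obsH α q ℓ) = 0 := fun r' hr' q' ℓ' hℓ' =>
    by_contra fun h => hmin r' hr' ⟨q', ℓ', hℓ', h⟩
  have hgrow := fun n hn => hδ.expect_obsH hα h3 ℓ₀ r hr q ℓ hℓ (n := n) hn
  obtain ⟨C₁, hC₁, h1⟩ := hμ.expect_sq_le hα h3 (fun n _ => hμ0 n) hℓ₀ q ℓ hℓ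
  obtain ⟨C₂, hC₂, h2⟩ := hν.expect_sq_le hα h3 (fun n _ => hν0 n) hℓ₀ q ℓ hℓ
  set c := expect (fun G => μ n₀ G - ν n₀ G) (obsH α q ℓ) with hcdef
  have hc0 : 0 < |c| := abs_pos.2 hc
  -- the truncation height is `t` times the growth factor
  set t := (C₁ + C₂ + 1) / (2 * |c|) with ht
  have ht0 : 0 < t := by positivity
  have htc : 2 * t * |c| = C₁ + C₂ + 1 := by
    rw [ht]
    field_simp
  refine ⟨|c| / (4 * t), by positivity, fun n hn => ?_⟩
  set g := growth α n₀ (∑ i, (ℓ i : ℝ)) n with hg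
  have hg0 : 0 < g := growth_pos hα h3 (by positivity) n
  have hb := abs_expect_le_of_sq (hμ0 n) (hν0 n) (hδ.mass n hn) (obsH_isoInv α q ℓ)
    (θ := t * g) (by positivity)
  have hgn : expect (fun G => μ n G - ν n G) (obsH α q ℓ) = g * c := hgrow n hn
  rw [hgn, abs_mul, abs_of_pos hg0] at hb
  have h12 : (expect (μ n) (fun G => obsH α q ℓ G ^ 2) +
      expect (ν n) (fun G => obsH α q ℓ G ^ 2)) / (4 * (t * g)) ≤ g * ((C₁ + C₂) / (4 * t)) := by
    rw [div_le_iff₀ (by positivity)]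
    have : g * ((C₁ + C₂) / (4 * t)) * (4 * (t * g)) = (C₁ + C₂) * g ^ 2 := by
      field_simp
    rw [this]
    linarith [h1 n hn, h2 n hn]
  set τ := tv (fun G => μ n G - ν n G)
  have h4 : g * |c| ≤ g * (2 * t * τ + (C₁ + C₂) / (4 * t)) := by
    calc g * |c| ≤ _ := hb
      _ ≤ 2 * (t * g) * τ + g * ((C₁ + C₂) / (4 * t)) := by linarith
      _ = _ := by ring
  have h5 := le_of_mul_le_mul_left h4 hg0
  have h6 : (C₁ + C₂) / (4 * t) ≤ |c| / 2 := by
    rw [div_le_iff₀ (by positivity)]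
    linarith
  rw [div_le_iff₀ (by positivity)]
  linarith

/-- Attaching a vertex to vertices of distinct degrees gives non-isomorphic graphs. -/
lemma extendTree_not_iso {n : ℕ} {G : SimpleGraph (Fin n)} {u v : Fin n}
    (h : degR G u ≠ degR G v) : ¬ Nonempty (extendTree G u ≃g extendTree G v) := by
  rintro ⟨e⟩
  -- the sum of the squared degrees tells them apart
  have key : ∀ w : Fin n, ∑ x, degR (extendTree G w) x ^ 2 =
      ∑ x, degR G x ^ 2 + 2 * degR G w + 2 := by
    intro w
    rw [Fin.sum_univ_castSucc]
    have : ∀ x, degR (extendTree G w) x.castSucc ^ 2 =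
        degR G x ^ 2 + if x = w then 2 * degR G x + 1 else 0 := by
      intro x
      rw [degR_extend_castSucc]
      split_ifs <;> ring
    simp only [this, degR_extend_last, Finset.sum_add_distrib, Finset.sum_ite_eq',
      Finset.mem_univ, if_true]
    ring
  have h1 : ∑ x, degR (extendTree G v) x ^ 2 = ∑ x, degR (extendTree G u) x ^ 2 := by
    rw [← e.toEquiv.sum_comp]
    exact Finset.sum_congr rfl fun x _ => congrArg (· ^ 2) (degR_iso e x)
  rw [key, key] at h1
  omega

/-- Not all degrees are equal: `n ≥ 3` vertices of positive degree have degree sum `2 (n - 1)`,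
which is not a multiple of `n`. -/
lemma Good.exists_degR_ne {n : ℕ} (hn : 3 ≤ n) {G : SimpleGraph (Fin n)} (hG : Good G) :
    ∃ u v, degR G u ≠ degR G v := by
  by_contra! h
  have h0 : 0 < n := by omega
  have h1 : ∑ v, degR G v = n * degR G ⟨0, h0⟩ := by
    rw [Finset.sum_congr rfl fun v _ => h v ⟨0, h0⟩]
    simp
  have h2 := hG.2
  have h3 := hG.1 ⟨0, h0⟩
  rw [h1] at h2
  rcases h3.lt_or_eq with h4 | h4
  · nlinarith
  · rw [← h4] at h2
    omega

lemma lawW_self (α : ℝ) {k : ℕ} (S G : SimpleGraph (Fin k)) :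
    lawW α S k G = if G = S then 1 else 0 :=
  congrFun (lawW_add α S 0) G

/-- With positive probability, the tree of size `k'` grown from `S` is not isomorphic to `S'`. -/
lemma exists_lawW_ne_zero {α : ℝ} (hα : 0 < α) {k k' : ℕ} (hk : 3 ≤ k) (hkk' : k ≤ k')
    {S : SimpleGraph (Fin k)} (hS : Good S) {S' : SimpleGraph (Fin k')}
    (hiso : ¬ Nonempty (S ≃g S')) :
    ∃ G, lawW α S k' G ≠ 0 ∧ ¬ Nonempty (G ≃g S') := by
  rcases hkk'.eq_or_lt with rfl | hlt
  · exact ⟨S, by rw [lawW_self, if_pos rfl]; exact one_ne_zero, hiso⟩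
  · obtain ⟨m, rfl⟩ : ∃ m, k' = m + 1 := ⟨k' - 1, by omega⟩
    have hm : k ≤ m := by omega
    have hch := lawW_chain hα hk hS
    have h0 := lawW_nonneg hα hk hS
    obtain ⟨T, -, hT⟩ := Finset.exists_ne_zero_of_sum_ne_zero
      ((hch.mass m hm).trans_ne one_ne_zero)
    have hTg := hch.good m hm T hT
    have hpos : ∀ u, lawW α S (m + 1) (extendTree T u) ≠ 0 := by
      intro u
      have h1 : lawW α S (m + 1) (extendTree T u) =
          expect (lawW α S m) (stepOp α fun G => if G = extendTree T u then 1 else 0) := by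
        rw [← hch.step m hm]
        simp [expect]
      have hi : ∀ G : SimpleGraph (Fin (m + 1)),
          (0 : ℝ) ≤ if G = extendTree T u then 1 else 0 := fun G => by
        split_ifs <;> norm_num
      have hZ := totW_pos hα (hk.trans hm)
      rw [h1]
      refine (Finset.sum_pos' (fun G _ => ?_) ⟨T, Finset.mem_univ T, ?_⟩).ne'
      · by_cases hG : lawW α S m G = 0
        · rw [hG, zero_mul]
        · exact mul_nonneg (h0 m G) (stepOp_nonneg hα (hk.trans hm) hi (hch.good m hm G hG))
      · refine mul_pos ((h0 m T).lt_of_ne' hT) (Finset.sum_pos' (fun v _ => ?_)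
          ⟨u, Finset.mem_univ u, ?_⟩)
        · exact mul_nonneg (div_nonneg (hTg.vtxW_pos hα v).le hZ.le) (hi _)
        · beta_reduce
          rw [if_pos rfl, mul_one]
          exact div_pos (hTg.vtxW_pos hα u) hZ
    obtain ⟨u, v, huv⟩ := hTg.exists_degR_ne (hk.trans hm)
    by_cases hu : Nonempty (extendTree T u ≃g S')
    · refine ⟨extendTree T v, hpos v, fun hv => ?_⟩
      obtain ⟨e⟩ := hu
      obtain ⟨e'⟩ := hv
      exact extendTree_not_iso huv ⟨e.trans e'.symm⟩
    · exact ⟨extendTree T u, hpos u, hu⟩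

/-- The observable of the pattern `S'` separates the chains started from `S` and `S'`. -/
lemma expect_pattern_ne {α : ℝ} (hα : 0 < α) {k k' : ℕ} (hk : 3 ≤ k) (hkk' : k ≤ k')
    {S : SimpleGraph (Fin k)} (hS : Good S) {S' : SimpleGraph (Fin k')} (hS' : Good S')
    (hiso : ¬ Nonempty (S ≃g S')) (ℓ₀ : ℕ) :
    expect (fun G => lawW α S k' G - lawW α S' k' G)
      (obsH α (fun K => if K = S' then 1 else 0) fun _ : Fin k' => ℓ₀) ≠ 0 := by
  set H : SimpleGraph (Fin k') → ℝ :=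
    obsH α (fun K => if K = S' then 1 else 0) (fun _ : Fin k' => ℓ₀) with hH
  have hinv : IsoInv H := obsH_isoInv α _ _
  have hzero : ∀ G, ¬ Nonempty (G ≃g S') → H G = 0 := by
    intro G hG
    refine Finset.sum_eq_zero fun f _ => ?_
    split_ifs with hf
    · beta_reduce
      rw [if_neg, zero_mul]
      intro hcomap
      let e : Fin k' ≃ Fin k' := Equiv.ofBijective f (Finite.injective_iff_bijective.1 hf)
      refine hG ⟨(RelIso.symm ⟨e, fun {a b} => ?_⟩)⟩
      rw [← hcomap]
      rfl
    · rfl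
  have hpos : 0 < H S' := by
    refine Finset.sum_pos' (fun f _ => ?_) ⟨id, Finset.mem_univ _, ?_⟩
    · have := (mono_pos hα hS' (expo f fun _ => ℓ₀)).le
      beta_reduce
      split_ifs <;> simp [this]
    · beta_reduce
      rw [if_pos Function.injective_id, if_pos S'.comap_id, one_mul]
      exact mono_pos hα hS' _
  have hle : ∀ G, H G ≤ H S' := by
    intro G
    by_cases hG : Nonempty (G ≃g S')
    · exact (hinv G S' hG).le
    · rw [hzero G hG]
      exact hpos.le
  have h1 : expect (lawW α S' k') H = H S' := by
    simp [expect, lawW_self]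
  have h2 : expect (lawW α S k') H < H S' := by
    obtain ⟨G, hG, hGi⟩ := exists_lawW_ne_zero hα hk hkk' hS hiso
    have hG0 := (lawW_nonneg hα hk hS k' G).lt_of_ne' hG
    calc expect (lawW α S k') H < ∑ G, lawW α S k' G * H S' := by
          refine Finset.sum_lt_sum
            (fun T _ => mul_le_mul_of_nonneg_left (hle T) (lawW_nonneg hα hk hS k' T))
            ⟨G, Finset.mem_univ G, ?_⟩
          rw [hzero G hGi]
          exact mul_lt_mul_of_pos_left hpos hG0
      _ = H S' := by
          rw [← Finset.sum_mul, (lawW_chain hα hk hS).mass k' hkk', one_mul]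
  rw [expect_sub_left, h1]
  exact (sub_neg.2 h2).ne

lemma tvDist_lower_bound {α : ℝ} (hα : 0 < α) {k k' : ℕ} (hk : 3 ≤ k) (hkk' : k ≤ k')
    {S : SimpleGraph (Fin k)} (hS : Good S) {S' : SimpleGraph (Fin k')} (hS' : Good S')
    (hiso : ¬ Nonempty (S ≃g S')) :
    ∃ ε, 0 < ε ∧ ∀ n, k' ≤ n → ε ≤ tvDist (isoClassLaw α S n) (isoClassLaw α S' n) := by
  have hk' := hk.trans hkk'
  obtain ⟨ℓ₀, hℓ₀⟩ := exists_nat_gt (1 + α)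
  obtain ⟨ε, hε, h⟩ := tv_lower_bound hα hk' ((lawW_chain hα hk hS).mono_start hkk')
    (lawW_chain hα hk' hS') (lawW_nonneg hα hk hS) (lawW_nonneg hα hk' hS') hℓ₀
    ⟨k', _, _, fun _ => le_rfl, expect_pattern_ne hα hk hkk' hS hS' hiso ℓ₀⟩
  refine ⟨ε, hε, fun n hn => ?_⟩
  rw [tvDist_isoClassLaw hα hk hk' hS hS' (hkk'.trans hn) hn]
  exact h n hn

lemma tvDist_comm {X : Type*} [MeasurableSpace X] (μ ν : Measure X) :
    tvDist μ ν = tvDist ν μ := by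
  simp only [tvDist, abs_sub_comm]

/-- The distances are eventually nonincreasing and nonnegative, hence converge. -/
lemma tvDist_tendsto {α : ℝ} (hα : 0 < α) {k k' : ℕ} (hk : 3 ≤ k) (hk' : 3 ≤ k')
    {S : SimpleGraph (Fin k)} (hS : Good S) {S' : SimpleGraph (Fin k')} (hS' : Good S') :
    ∃ L : ℝ, Tendsto (fun n => tvDist (isoClassLaw α S n) (isoClassLaw α S' n)) atTop (nhds L) := by
  have hδ : SChain α (max k k') 0 (fun n G => lawW α S n G - lawW α S' n G) := by
    simpa using ((lawW_chain hα hk hS).mono_start (le_max_left k k')).sub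
      ((lawW_chain hα hk' hS').mono_start (le_max_right k k'))
  have heq : ∀ n, tvDist (isoClassLaw α S (n + max k k')) (isoClassLaw α S' (n + max k k')) =
      tv (fun G => lawW α S (n + max k k') G - lawW α S' (n + max k k') G) := fun n =>
    tvDist_isoClassLaw hα hk hk' hS hS' (le_add_left (le_max_left k k'))
      (le_add_left (le_max_right k k'))
  have hanti : Antitone fun n =>
      tv (fun G => lawW α S (n + max k k') G - lawW α S' (n + max k k') G) := by
    refine antitone_nat_of_succ_le fun n => ?_
    rw [show n + 1 + max k k' = n + max k k' + 1 by omega]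
    exact hδ.tv_succ_le hα (hk.trans (le_max_left k k')) (Nat.le_add_left _ _)
  have hlim := tendsto_atTop_ciInf hanti ⟨0, by rintro _ ⟨n, rfl⟩; exact tv_nonneg _⟩
  simp only [← heq] at hlim
  exact ⟨_, (tendsto_add_atTop_iff_nat (f := fun n =>
    tvDist (isoClassLaw α S n) (isoClassLaw α S' n)) (max k k')).1 hlim⟩

end Proof

/-- For every `α > 0` and any two seed trees `S, S'` of sizes `≥ 3`,
the limit `d(S,S') = lim_n d_TV(T_n^S, T_n^{S'})` of the total variation distances between
the laws of the isomorphism classes of the α-PA trees exists, and it is positive whenever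
`S` and `S'` are not graph-isomorphic. -/
theorem seed_recognition (α : ℝ) (hα : 0 < α) (k k' : ℕ) (hk : 3 ≤ k) (hk' : 3 ≤ k')
    (S : SimpleGraph (Fin k)) (hS : S.IsTree) (S' : SimpleGraph (Fin k')) (hS' : S'.IsTree) :
    ∃ L : ℝ,
      Tendsto (fun n => tvDist (isoClassLaw α S n) (isoClassLaw α S' n)) atTop (nhds L) ∧
        (¬ Nonempty (S ≃g S') → 0 < L) := by
  have hG := good_of_isTree hk hS
  have hG' := good_of_isTree hk' hS'
  obtain ⟨L, hL⟩ := tvDist_tendsto hα hk hk' hG hG'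
  refine ⟨L, hL, fun hiso => ?_⟩
  obtain ⟨ε, hε, h⟩ : ∃ ε, 0 < ε ∧ ∀ n, max k k' ≤ n →
      ε ≤ tvDist (isoClassLaw α S n) (isoClassLaw α S' n) := by
    rcases le_total k k' with hkk | hkk
    · obtain ⟨ε, hε, h⟩ := tvDist_lower_bound hα hk hkk hG hG' hiso
      exact ⟨ε, hε, fun n hn => h n ((le_max_right _ _).trans hn)⟩
    · obtain ⟨ε, hε, h⟩ := tvDist_lower_bound hα hk' hkk hG' hG fun ⟨e⟩ => hiso ⟨e.symm⟩
      refine ⟨ε, hε, fun n hn => ?_⟩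
      rw [tvDist_comm]
      exact h n ((le_max_left _ _).trans hn)
  exact hε.trans_le (ge_of_tendsto hL ((eventually_ge_atTop _).mono h))

end AffinePA
end
end

section
/- For any two real-valued, square-integrable random variables X and Y, the total variation distance between their laws satisfies d_TV(X,Y) ≥ (E[X] − E[Y])² / ( (E[X] − E[Y])² + 2·(E[X²] + E[Y²]) ). -/
/-!
Let `μ`, `ν` be the laws of `X` and `Y`, let `f`, `g` be their densities with respect to `μ + ν`,
and let `d = E[X] - E[Y] = ∫ x (f - g)`. By Cauchy–Schwarz for the weight `|f - g|`,
`d² ≤ (∫ |f - g|) (∫ x² |f - g|)`. The first factor is at most twice the total variation distance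
(split the line along `{g ≤ f}`), and the second is at most `∫ x² (f + g) = E[X²] + E[Y²]`.
Hence `d² ≤ 2 d_TV (E[X²] + E[Y²])`, which is stronger than the claim.
-/

open MeasureTheory Filter Asymptotics

noncomputable section

namespace AffinePA

lemma bddAbove_tvDist {α : Type*} [MeasurableSpace α] (μ ν : Measure α)
    [IsProbabilityMeasure μ] [IsProbabilityMeasure ν] :
    BddAbove (Set.range fun s : {s : Set α // MeasurableSet s} =>
      |(μ ↑s).toReal - (ν ↑s).toReal|) := by
  refine ⟨1, ?_⟩
  rintro _ ⟨s, rfl⟩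
  have h1 : (μ ↑s).toReal ≤ 1 := measureReal_le_one
  have h2 : (ν ↑s).toReal ≤ 1 := measureReal_le_one
  have h3 : 0 ≤ (μ ↑s).toReal := ENNReal.toReal_nonneg
  have h4 : 0 ≤ (ν ↑s).toReal := ENNReal.toReal_nonneg
  exact abs_le.2 ⟨by linarith, by linarith⟩

lemma abs_sub_le_tvDist {α : Type*} [MeasurableSpace α] (μ ν : Measure α)
    [IsProbabilityMeasure μ] [IsProbabilityMeasure ν] {s : Set α} (hs : MeasurableSet s) :
    |(μ s).toReal - (ν s).toReal| ≤ tvDist μ ν :=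
  le_ciSup (bddAbove_tvDist μ ν) ⟨s, hs⟩

lemma tvDist_nonneg {α : Type*} [MeasurableSpace α] (μ ν : Measure α) : 0 ≤ tvDist μ ν :=
  Real.iSup_nonneg fun _ => abs_nonneg _

/-- The `L¹` distance of the densities with respect to `μ + ν` is at most twice the total
variation distance. -/
lemma integral_abs_rnDeriv_sub_le {α : Type*} [MeasurableSpace α] (μ ν : Measure α)
    [IsProbabilityMeasure μ] [IsProbabilityMeasure ν] :
    ∫ x, |(μ.rnDeriv (μ + ν) x).toReal - (ν.rnDeriv (μ + ν) x).toReal| ∂(μ + ν)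
      ≤ 2 * tvDist μ ν := by
  have hμ : μ ≪ μ + ν := Measure.absolutelyContinuous_of_le (Measure.le_add_right le_rfl)
  have hν : ν ≪ μ + ν := Measure.absolutelyContinuous_of_le (Measure.le_add_left le_rfl)
  set f : α → ℝ := fun x => (μ.rnDeriv (μ + ν) x).toReal with hf
  set g : α → ℝ := fun x => (ν.rnDeriv (μ + ν) x).toReal with hg
  have hfi : Integrable f (μ + ν) := Measure.integrable_toReal_rnDeriv
  have hgi : Integrable g (μ + ν) := Measure.integrable_toReal_rnDeriv
  have hfm : Measurable f := (Measure.measurable_rnDeriv _ _).ennreal_toReal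
  have hgm : Measurable g := (Measure.measurable_rnDeriv _ _).ennreal_toReal
  set A : Set α := {x | g x ≤ f x} with hA
  have hAm : MeasurableSet A := measurableSet_le hgm hfm
  have eμ : ∀ s, ∫ x in s, f x ∂(μ + ν) = (μ s).toReal := fun s =>
    Measure.setIntegral_toReal_rnDeriv hμ s
  have eν : ∀ s, ∫ x in s, g x ∂(μ + ν) = (ν s).toReal := fun s =>
    Measure.setIntegral_toReal_rnDeriv hν s
  have h1 : ∫ x in A, |f x - g x| ∂(μ + ν) = (μ A).toReal - (ν A).toReal := by
    rw [← eμ, ← eν, ← integral_sub hfi.integrableOn hgi.integrableOn]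
    exact setIntegral_congr_fun hAm fun x hx => abs_of_nonneg (sub_nonneg.2 hx)
  have h2 : ∫ x in Aᶜ, |f x - g x| ∂(μ + ν) = (ν Aᶜ).toReal - (μ Aᶜ).toReal := by
    rw [← eμ, ← eν, ← integral_sub hgi.integrableOn hfi.integrableOn]
    refine setIntegral_congr_fun hAm.compl fun x hx => ?_
    have hx' : f x < g x := not_le.1 hx
    simp only [abs_of_neg (sub_neg.2 hx'), neg_sub]
  have h3 := integral_add_compl hAm (hfi.sub hgi).abs
  simp only [Pi.sub_apply] at h3
  have h4 := abs_le.1 (abs_sub_le_tvDist μ ν hAm)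
  have h5 := abs_le.1 (abs_sub_le_tvDist μ ν hAm.compl)
  change ∫ x, |f x - g x| ∂(μ + ν) ≤ _
  linarith [h4.2, h5.1]

/-- Cauchy–Schwarz for a signed density `w`, in the form `(∫ w u)² ≤ (∫ |w|) (∫ |w| u²)`. -/
lemma sq_integral_mul_le {α : Type*} [MeasurableSpace α] (κ : Measure α) (w u : α → ℝ)
    (h0 : Integrable w κ) (h1 : Integrable (fun x => w x * u x) κ)
    (h2 : Integrable (fun x => w x * u x ^ 2) κ) :
    (∫ x, w x * u x ∂κ) ^ 2 ≤ (∫ x, |w x| ∂κ) * ∫ x, |w x| * u x ^ 2 ∂κ := by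
  have i1 : Integrable (fun x => |w x| * |u x|) κ := by simpa only [abs_mul] using h1.abs
  have i2 : Integrable (fun x => |w x| * u x ^ 2) κ := by
    simpa only [abs_mul, abs_pow, sq_abs] using h2.abs
  -- the quadratic polynomial `s ↦ ∫ |w| (s + |u|)²` is nonnegative
  have hq : ∀ s : ℝ, 0 ≤ (∫ x, |w x| ∂κ) * (s * s) + (2 * ∫ x, |w x| * |u x| ∂κ) * s
      + ∫ x, |w x| * u x ^ 2 ∂κ := by
    intro s
    have hs : 0 ≤ ∫ x, (|w x| * (s * s) + (2 * (|w x| * |u x|)) * s + |w x| * u x ^ 2) ∂κ := by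
      refine integral_nonneg fun x => ?_
      have : 0 ≤ |w x| * (s + |u x|) ^ 2 := by positivity
      simp only [Pi.zero_apply]
      rw [← sq_abs (u x)]
      linarith
    have j0 : Integrable (fun x => |w x| * (s * s)) κ := h0.abs.mul_const _
    have j1 : Integrable (fun x => (2 * (|w x| * |u x|)) * s) κ := (i1.const_mul 2).mul_const s
    have j01 : Integrable (fun x => |w x| * (s * s) + (2 * (|w x| * |u x|)) * s) κ := j0.add j1
    rwa [integral_add j01 i2, integral_add j0 j1, integral_mul_const,
      integral_mul_const, integral_const_mul] at hs
  have hd := discrim_le_zero hq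
  have hb : |∫ x, w x * u x ∂κ| ≤ ∫ x, |w x| * |u x| ∂κ := by
    simpa only [abs_mul] using abs_integral_le_integral_abs (f := fun x => w x * u x) (μ := κ)
  have hb2 := pow_le_pow_left₀ (abs_nonneg _) hb 2
  rw [sq_abs] at hb2
  unfold discrim at hd
  linarith

/-- The sharper bound `(∫ x dμ - ∫ x dν)² ≤ 2 d_TV(μ, ν) (∫ x² dμ + ∫ x² dν)`. -/
lemma sq_sub_le_tvDist (μ ν : Measure ℝ) [IsProbabilityMeasure μ] [IsProbabilityMeasure ν]
    (hμ2 : Integrable (fun x : ℝ => x ^ 2) μ) (hν2 : Integrable (fun x : ℝ => x ^ 2) ν) :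
    ((∫ x, x ∂μ) - ∫ x, x ∂ν) ^ 2
      ≤ 2 * tvDist μ ν * ((∫ x, x ^ 2 ∂μ) + ∫ x, x ^ 2 ∂ν) := by
  have hμ : μ ≪ μ + ν := Measure.absolutelyContinuous_of_le (Measure.le_add_right le_rfl)
  have hν : ν ≪ μ + ν := Measure.absolutelyContinuous_of_le (Measure.le_add_left le_rfl)
  have hμ1 : Integrable (fun x : ℝ => x) μ :=
    ((memLp_two_iff_integrable_sq (by fun_prop)).2 hμ2).integrable one_le_two
  have hν1 : Integrable (fun x : ℝ => x) ν :=
    ((memLp_two_iff_integrable_sq (by fun_prop)).2 hν2).integrable one_le_two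
  have hT := integral_abs_rnDeriv_sub_le μ ν
  rw [← integral_rnDeriv_smul hμ, ← integral_rnDeriv_smul hν,
    ← integral_rnDeriv_smul hμ (f := fun x : ℝ => x ^ 2),
    ← integral_rnDeriv_smul hν (f := fun x : ℝ => x ^ 2)]
  rw [← integrable_rnDeriv_smul_iff hμ] at hμ1 hμ2
  rw [← integrable_rnDeriv_smul_iff hν] at hν1 hν2
  have hfi : Integrable (fun x => (μ.rnDeriv (μ + ν) x).toReal) (μ + ν) :=
    Measure.integrable_toReal_rnDeriv
  have hgi : Integrable (fun x => (ν.rnDeriv (μ + ν) x).toReal) (μ + ν) :=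
    Measure.integrable_toReal_rnDeriv
  have hf0 : ∀ x, 0 ≤ (μ.rnDeriv (μ + ν) x).toReal := fun _ => ENNReal.toReal_nonneg
  have hg0 : ∀ x, 0 ≤ (ν.rnDeriv (μ + ν) x).toReal := fun _ => ENNReal.toReal_nonneg
  simp only [smul_eq_mul] at hμ1 hν1 hμ2 hν2 ⊢
  generalize hκ : μ + ν = κ at *
  set f : ℝ → ℝ := fun x => (μ.rnDeriv κ x).toReal
  set g : ℝ → ℝ := fun x => (ν.rnDeriv κ x).toReal
  change ((∫ x, f x * x ∂κ) - ∫ x, g x * x ∂κ) ^ 2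
    ≤ 2 * tvDist μ ν * ((∫ x, f x * x ^ 2 ∂κ) + ∫ x, g x * x ^ 2 ∂κ)
  have hw2 : Integrable (fun x => (f x - g x) * x ^ 2) κ := by
    simp only [sub_mul]
    exact hμ2.sub hν2
  have hCS := sq_integral_mul_le κ (fun x => f x - g x) (fun x => x) (hfi.sub hgi)
    (by simp only [sub_mul]; exact hμ1.sub hν1) hw2
  have ha : ∫ x, |f x - g x| * x ^ 2 ∂κ ≤ (∫ x, f x * x ^ 2 ∂κ) + ∫ x, g x * x ^ 2 ∂κ := by
    rw [← integral_add hμ2 hν2]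
    refine integral_mono (by simpa only [abs_mul, abs_pow, sq_abs] using hw2.abs)
      (hμ2.add hν2) fun x => ?_
    have : |f x - g x| ≤ f x + g x :=
      abs_le.2 ⟨by linarith [hf0 x, hg0 x], by linarith [hf0 x, hg0 x]⟩
    simpa only [add_mul] using mul_le_mul_of_nonneg_right this (sq_nonneg x)
  have hd : ∫ x, (f x - g x) * x ∂κ = (∫ x, f x * x ∂κ) - ∫ x, g x * x ∂κ := by
    simpa only [sub_mul] using integral_sub hμ1 hν1
  rw [← hd]
  refine hCS.trans (mul_le_mul hT ha (integral_nonneg fun x => ?_) ?_)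
  · exact mul_nonneg (abs_nonneg _) (sq_nonneg x)
  · exact mul_nonneg zero_le_two (tvDist_nonneg μ ν)

/-- **Lemma 1.3.** For any two real-valued square-integrable random variables
`X` and `Y`, `d_TV(X,Y) ≥ (E[X]-E[Y])² / ((E[X]-E[Y])² + 2(E[X²]+E[Y²]))`. -/
theorem tv_lower_bound_moments {Ω₁ Ω₂ : Type*} [MeasurableSpace Ω₁] [MeasurableSpace Ω₂]
    (P₁ : Measure Ω₁) (P₂ : Measure Ω₂)
    [IsProbabilityMeasure P₁] [IsProbabilityMeasure P₂]
    (X : Ω₁ → ℝ) (Y : Ω₂ → ℝ) (hX : Measurable X) (hY : Measurable Y)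
    (hX2 : Integrable (fun ω => (X ω) ^ 2) P₁) (hY2 : Integrable (fun ω => (Y ω) ^ 2) P₂) :
    ((∫ ω, X ω ∂P₁) - ∫ ω, Y ω ∂P₂) ^ 2 /
        (((∫ ω, X ω ∂P₁) - ∫ ω, Y ω ∂P₂) ^ 2 +
          2 * ((∫ ω, (X ω) ^ 2 ∂P₁) + ∫ ω, (Y ω) ^ 2 ∂P₂)) ≤
      tvDist (P₁.map X) (P₂.map Y) := by
  have hmx : ∀ p : ℕ, ∫ x, x ^ p ∂(P₁.map X) = ∫ ω, X ω ^ p ∂P₁ := fun p =>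
    integral_map hX.aemeasurable (by fun_prop)
  have hmy : ∀ p : ℕ, ∫ x, x ^ p ∂(P₂.map Y) = ∫ ω, Y ω ^ p ∂P₂ := fun p =>
    integral_map hY.aemeasurable (by fun_prop)
  have : IsProbabilityMeasure (P₁.map X) := Measure.isProbabilityMeasure_map hX.aemeasurable
  have : IsProbabilityMeasure (P₂.map Y) := Measure.isProbabilityMeasure_map hY.aemeasurable
  have key := sq_sub_le_tvDist (P₁.map X) (P₂.map Y)
    ((integrable_map_measure (by fun_prop) hX.aemeasurable).2 hX2)
    ((integrable_map_measure (by fun_prop) hY.aemeasurable).2 hY2)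
  have hmx1 := hmx 1
  have hmy1 := hmy 1
  simp only [pow_one] at hmx1 hmy1
  rw [hmx1, hmy1, hmx 2, hmy 2] at key
  have hS : 0 ≤ (∫ ω, X ω ^ 2 ∂P₁) + ∫ ω, Y ω ^ 2 ∂P₂ :=
    add_nonneg (integral_nonneg fun _ => sq_nonneg _) (integral_nonneg fun _ => sq_nonneg _)
  have ht := tvDist_nonneg (P₁.map X) (P₂.map Y)
  refine div_le_of_le_mul₀ (by positivity) ht ?_
  have := mul_nonneg ht (sq_nonneg ((∫ ω, X ω ∂P₁) - ∫ ω, Y ω ∂P₂))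
  linarith

end AffinePA
end
end
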